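/- Let R be a regular ring (i.e., R_p is a regular local ring for every prime p). Then the maps φ and ψ, defined by φ(X)(p) = max_{X∈X} pd_{R_p} X_p and ψ(f) = { M ∈ mod R : pd_{R_p} M_p ≤ f(p) for all p ∈ Spec R }, are mutually inverse bijections between the set of all resolving subcategories of mod R and the set of grade consistent functions on Spec R. -/

import Mathlib

universe u

open CategoryTheory

namespace ResolvPaper

variable (R : Type u) [CommRing R]

/-- `IsSES f g` means `0 → A → B → C → 0` is a short exact sequence. -/
def IsSES {R : Type u} [CommRing R] {A B C : Type u} [AddCommGroup A] [Module R A]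
    [AddCommGroup B] [Module R B] [AddCommGroup C] [Module R C]
    (f : A →ₗ[R] B) (g : B →ₗ[R] C) : Prop :=
  Function.Injective f ∧ Function.Surjective g ∧ LinearMap.range f = LinearMap.ker g

/-- A resolving subcategory of `mod R`, viewed as a set of bundled modules
closed under isomorphism, containing the finitely generated projective modules, and closed
under direct summands, extensions and syzygies. -/
structure IsResolving (𝒳 : Set (ModuleCat.{u} R)) : Prop where
  fg : ∀ M ∈ 𝒳, Module.Finite R M
  iso_closed : ∀ M N : ModuleCat.{u} R, Nonempty (M ≃ₗ[R] N) → M ∈ 𝒳 → N ∈ 𝒳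
  proj_mem : ∀ M : ModuleCat.{u} R, Module.Finite R M → Module.Projective R M → M ∈ 𝒳
  summand_closed : ∀ M N : ModuleCat.{u} R, ModuleCat.of R (↥M × ↥N) ∈ 𝒳 → M ∈ 𝒳
  ext_closed : ∀ (A B C : ModuleCat.{u} R) (f : A →ₗ[R] B) (g : B →ₗ[R] C),
    IsSES f g → A ∈ 𝒳 → C ∈ 𝒳 → B ∈ 𝒳
  syzygy_closed : ∀ (K P M : ModuleCat.{u} R) (f : K →ₗ[R] P) (g : P →ₗ[R] M),
    IsSES f g → Module.Finite R K → Module.Finite R P → Module.Projective R P →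
    M ∈ 𝒳 → K ∈ 𝒳

/-- The resolving closure: the smallest resolving subcategory containing `S`. -/
def resClosure (S : Set (ModuleCat.{u} R)) : Set (ModuleCat.{u} R) :=
  ⋂₀ {𝒳 | IsResolving R 𝒳 ∧ S ⊆ 𝒳}

/-- An extension-closed subcategory of `mod R`: closed under isomorphism,
direct summands and extensions. -/
def IsExtClosed (𝒳 : Set (ModuleCat.{u} R)) : Prop :=
  (∀ M N : ModuleCat.{u} R, Nonempty (M ≃ₗ[R] N) → M ∈ 𝒳 → N ∈ 𝒳) ∧
  (∀ M N : ModuleCat.{u} R, ModuleCat.of R (↥M × ↥N) ∈ 𝒳 → M ∈ 𝒳) ∧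
  (∀ (A B C : ModuleCat.{u} R) (f : A →ₗ[R] B) (g : B →ₗ[R] C),
    IsSES f g → A ∈ 𝒳 → C ∈ 𝒳 → B ∈ 𝒳)

/-- The extension closure of a set of modules. -/
def extClosure (S : Set (ModuleCat.{u} R)) : Set (ModuleCat.{u} R) :=
  ⋂₀ {𝒳 | IsExtClosed R 𝒳 ∧ S ⊆ 𝒳}

/-- `add R`: direct summands of finite free modules. -/
def addR : Set (ModuleCat.{u} R) :=
  {M | ∃ (n : ℕ) (N : ModuleCat.{u} R), Nonempty ((↥M × ↥N) ≃ₗ[R] (Fin n → R))}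

/-- `pdLE n M` : the projective dimension of `M` is at most `n`. -/
def pdLE : ℕ → ModuleCat.{u} R → Prop
  | 0, M => Module.Projective R M
  | n+1, M => ∃ (K P : ModuleCat.{u} R) (f : K →ₗ[R] P) (g : P →ₗ[R] M),
      Module.Finite R P ∧ Module.Projective R P ∧ IsSES f g ∧ pdLE n K

/-- The projective dimension, an element of `WithBot ℕ∞`; the zero module
has projective dimension `⊥ = -∞`. -/
noncomputable def pdim (M : ModuleCat.{u} R) : WithBot ℕ∞ :=
  sInf {x : WithBot ℕ∞ | (x = ⊥ ∧ Subsingleton M) ∨ ∃ n : ℕ, x = (n : ℕ∞) ∧ pdLE R n M}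

/-- The depth of `M` with respect to the ideal `I`: the supremum of lengths of weakly
`M`-regular sequences contained in `I`.  The zero module has depth `∞`. -/
noncomputable def depthE (I : Ideal R) (M : Type u) [AddCommGroup M] [Module R M] : ℕ∞ :=
  sSup {x : ℕ∞ | ∃ rs : List R, (∀ r ∈ rs, r ∈ I) ∧
    RingTheory.Sequence.IsWeaklyRegular M rs ∧ x = rs.length}

/-- The grade of an ideal: the length of a maximal `R`-regular sequence in `I`. -/
noncomputable def gradeE (I : Ideal R) : ℕ∞ := depthE R I R

/-- A grade consistent function on `Spec R`. -/
def GradeConsistent (f : PrimeSpectrum R → ℕ) : Prop :=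
  (∀ p : PrimeSpectrum R, (f p : ℕ∞) ≤ gradeE R p.asIdeal) ∧
  (∀ p q : PrimeSpectrum R, p.asIdeal ≤ q.asIdeal → f p ≤ f q)

/-- The localization of a module at a prime, as a module over the local ring `R_p`. -/
noncomputable abbrev localizeM (p : PrimeSpectrum R) (M : ModuleCat.{u} R) :
    ModuleCat.{u} (Localization.AtPrime p.asIdeal) :=
  ModuleCat.of (Localization.AtPrime p.asIdeal) (LocalizedModule p.asIdeal.primeCompl M)

/-- `pd_{R_p} M_p`. -/
noncomputable def localPdim (p : PrimeSpectrum R) (M : ModuleCat.{u} R) : WithBot ℕ∞ :=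
  pdim (Localization.AtPrime p.asIdeal) (localizeM R p M)

/-- `depth_{R_p} M_p`. -/
noncomputable def localDepth (p : PrimeSpectrum R) (M : ModuleCat.{u} R) : ℕ∞ :=
  depthE (Localization.AtPrime p.asIdeal)
    (IsLocalRing.maximalIdeal (Localization.AtPrime p.asIdeal))
    (LocalizedModule p.asIdeal.primeCompl M)

/-- The height of a prime ideal. -/
noncomputable def heightE (p : PrimeSpectrum R) : ℕ∞ := Order.height p

/-- `PD(R)` : finitely generated modules of finite projective dimension. -/
def PDcat : Set (ModuleCat.{u} R) :=
  {M | Module.Finite R M ∧ ∃ n : ℕ, pdLE R n M}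

/-- `MCM(R)` : maximal Cohen-Macaulay modules. -/
def MCMcat : Set (ModuleCat.{u} R) :=
  {M | Module.Finite R M ∧ ∀ p : PrimeSpectrum R, heightE R p ≤ localDepth R p M}

/-- The nonfree locus of a module. -/
def NF (M : ModuleCat.{u} R) : Set (PrimeSpectrum R) :=
  {p | ¬ Module.Free (Localization.AtPrime p.asIdeal) (LocalizedModule p.asIdeal.primeCompl M)}

/-- The infinite projective dimension locus of a module. -/
def IPD (M : ModuleCat.{u} R) : Set (PrimeSpectrum R) :=
  {p | localPdim R p M = (⊤ : WithBot ℕ∞)}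

/-- The infinite projective dimension locus of a collection of modules. -/
def IPDcat (𝒳 : Set (ModuleCat.{u} R)) : Set (PrimeSpectrum R) :=
  ⋃ M ∈ 𝒳, IPD R M

/-- The modules in `mod R` whose infinite projective dimension locus lies in `W`. -/
def IPDinv (W : Set (PrimeSpectrum R)) : Set (ModuleCat.{u} R) :=
  {M | Module.Finite R M ∧ IPD R M ⊆ W}

/-- A specialization closed subset of `Spec R`. -/
def SpecClosed (W : Set (PrimeSpectrum R)) : Prop :=
  ∀ p ∈ W, ∀ q : PrimeSpectrum R, p.asIdeal ≤ q.asIdeal → q ∈ W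

/-- Membership in `add 𝒳_p`: direct summands of localizations of finite direct sums
of members of `𝒳`. -/
def memAddLocal (𝒳 : Set (ModuleCat.{u} R)) (p : PrimeSpectrum R)
    (N : ModuleCat.{u} (Localization.AtPrime p.asIdeal)) : Prop :=
  ∃ (n : ℕ) (X : Fin n → ModuleCat.{u} R), (∀ i, X i ∈ 𝒳) ∧
    ∃ (N' : ModuleCat.{u} (Localization.AtPrime p.asIdeal)),
      Nonempty ((↥N × ↥N') ≃ₗ[Localization.AtPrime p.asIdeal]
        ((i : Fin n) → LocalizedModule p.asIdeal.primeCompl (X i)))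

/-- `K` is an `n`-th syzygy of `M` computed from a minimal free resolution over the
local ring `S`. -/
def IsMinSyz (S : Type u) [CommRing S] [IsLocalRing S] :
    ℕ → ModuleCat.{u} S → ModuleCat.{u} S → Prop
  | 0, M, K => Nonempty (K ≃ₗ[S] M)
  | n+1, M, K => ∃ (F : ModuleCat.{u} S) (g : F →ₗ[S] M) (K' : ModuleCat.{u} S)
      (i : K' →ₗ[S] F),
      Module.Finite S F ∧ Module.Free S F ∧ Function.Surjective g ∧
      (LinearMap.ker g ≤ (IsLocalRing.maximalIdeal S) • (⊤ : Submodule S F)) ∧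
      Function.Injective i ∧ LinearMap.range i = LinearMap.ker g ∧
      IsMinSyz S n K' K

/-- `K` is an `n`-th syzygy of `M` in some projective resolution (over any ring). -/
def IsSyz : ℕ → ModuleCat.{u} R → ModuleCat.{u} R → Prop
  | 0, M, K => Nonempty (K ≃ₗ[R] M)
  | n+1, M, K => ∃ (F : ModuleCat.{u} R) (g : F →ₗ[R] M) (K' : ModuleCat.{u} R)
      (i : K' →ₗ[R] F),
      Module.Finite R F ∧ Module.Projective R F ∧ Function.Surjective g ∧
      Function.Injective i ∧ LinearMap.range i = LinearMap.ker g ∧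
      IsSyz n K' K

/-- `T` is (isomorphic to) the Auslander transpose of `M`, computed from a minimal
free presentation over the local ring `S`. -/
def IsTranspose (S : Type u) [CommRing S] [IsLocalRing S] (M T : ModuleCat.{u} S) : Prop :=
  ∃ (F1 F0 : ModuleCat.{u} S) (d : F1 →ₗ[S] F0) (e : F0 →ₗ[S] M),
    Module.Finite S F0 ∧ Module.Free S F0 ∧ Module.Finite S F1 ∧ Module.Free S F1 ∧
    Function.Surjective e ∧ LinearMap.range d = LinearMap.ker e ∧
    LinearMap.ker e ≤ (IsLocalRing.maximalIdeal S) • (⊤ : Submodule S F0) ∧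
    LinearMap.ker d ≤ (IsLocalRing.maximalIdeal S) • (⊤ : Submodule S F1) ∧
    Nonempty (T ≃ₗ[S] ((Module.Dual S F1) ⧸ LinearMap.range d.dualMap))

/-- `T` is (isomorphic to) `Tr Ω^n M` over the local ring `S`. -/
def IsTrOmega (S : Type u) [CommRing S] [IsLocalRing S] (n : ℕ) (M T : ModuleCat.{u} S) :
    Prop :=
  ∃ K : ModuleCat.{u} S, IsMinSyz S n M K ∧ IsTranspose S K T

/-- Resolving subcategory `𝒳` is dominant on `W ⊆ Spec R`. -/
def DominantOn (𝒳 : Set (ModuleCat.{u} R)) (W : Set (PrimeSpectrum R)) : Prop :=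
  ∀ p ∈ W, ∃ (n : ℕ) (K : ModuleCat.{u} (Localization.AtPrime p.asIdeal)),
    IsMinSyz (Localization.AtPrime p.asIdeal) n
      (ModuleCat.of (Localization.AtPrime p.asIdeal)
        (IsLocalRing.ResidueField (Localization.AtPrime p.asIdeal))) K ∧
    memAddLocal R 𝒳 p K

/-- Dominant resolving subcategory. -/
def Dominant (𝒳 : Set (ModuleCat.{u} R)) : Prop := DominantOn R 𝒳 Set.univ

/-- A (noetherian) local ring is Cohen-Macaulay if its depth equals its Krull dimension. -/
def IsCMLocalRing (S : Type u) [CommRing S] [IsLocalRing S] : Prop :=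
  IsNoetherianRing S ∧
    ((depthE S (IsLocalRing.maximalIdeal S) S : WithBot ℕ∞) = ringKrullDim S)

/-- A regular local ring: a noetherian local ring whose maximal ideal is generated by
`dim S` elements. -/
def IsRegLocalRing (S : Type u) [CommRing S] [IsLocalRing S] : Prop :=
  IsNoetherianRing S ∧ ∃ s : Finset S,
    Ideal.span (s : Set S) = IsLocalRing.maximalIdeal S ∧
    ringKrullDim S = (s.card : WithBot ℕ∞)

/-- The singular locus of `R`. -/
def SingLocus : Set (PrimeSpectrum R) :=
  {p | ¬ IsRegLocalRing (Localization.AtPrime p.asIdeal)}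

/-- A hypersurface local ring: the completion is a quotient of a regular local ring by
one element. -/
def IsHypersurfaceLocalRing (S : Type u) [CommRing S] [IsLocalRing S] : Prop :=
  ∃ (T : Type u) (_ : CommRing T) (_ : IsLocalRing T) (f : T),
    IsRegLocalRing T ∧
    Nonempty ((AdicCompletion (IsLocalRing.maximalIdeal S) S) ≃+* (T ⧸ Ideal.span {f}))

/-- A complete intersection local ring: the completion is a quotient of a regular local
ring by a regular sequence. -/
def IsCompleteIntersectionLocalRing (S : Type u) [CommRing S] [IsLocalRing S] : Prop :=
  ∃ (T : Type u) (_ : CommRing T) (_ : IsLocalRing T) (rs : List T),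
    IsRegLocalRing T ∧ RingTheory.Sequence.IsRegular T rs ∧
    Nonempty ((AdicCompletion (IsLocalRing.maximalIdeal S) S) ≃+*
      (T ⧸ Ideal.ofList rs))

/-- The subquotient `A / (A ⊓ B)` of two submodules, used for homology. -/
def subquot {S M : Type u} [CommRing S] [AddCommGroup M] [Module S M]
    (A B : Submodule S M) : Type u :=
  A ⧸ (B.comap A.subtype)

noncomputable instance {S M : Type u} [CommRing S] [AddCommGroup M] [Module S M]
    (A B : Submodule S M) : AddCommGroup (subquot A B) :=
  inferInstanceAs (AddCommGroup (A ⧸ (B.comap A.subtype)))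

noncomputable instance {S M : Type u} [CommRing S] [AddCommGroup M] [Module S M]
    (A B : Submodule S M) : Module S (subquot A B) :=
  inferInstanceAs (Module S (A ⧸ (B.comap A.subtype)))

/-- `E` is (isomorphic to) `Ext^{j+1}_S(M, S)`, computed from a finite free resolution. -/
def IsExtPos (S : Type u) [CommRing S] (j : ℕ) (M E : ModuleCat.{u} S) : Prop :=
  ∃ (F : ℕ → ModuleCat.{u} S) (d : ∀ i : ℕ, (F (i+1) : Type u) →ₗ[S] F i)
    (e : (F 0 : Type u) →ₗ[S] M),
    (∀ i, Module.Finite S (F i)) ∧ (∀ i, Module.Free S (F i)) ∧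
    Function.Surjective e ∧ LinearMap.range (d 0) = LinearMap.ker e ∧
    (∀ i, LinearMap.range (d (i+1)) = LinearMap.ker (d i)) ∧
    Nonempty (E ≃ₗ[S]
      subquot (LinearMap.ker ((d (j+1)).dualMap)) (LinearMap.range ((d j).dualMap)))

/-- `T` is (isomorphic to) `Tor_n^S(M, N)`, computed from a projective resolution of `M`. -/
def IsTor (S : Type u) [CommRing S] (n : ℕ) (M N T : ModuleCat.{u} S) : Prop :=
  ∃ (F : ℕ → ModuleCat.{u} S) (d : ∀ i : ℕ, (F (i+1) : Type u) →ₗ[S] F i)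
    (e : (F 0 : Type u) →ₗ[S] M),
    (∀ i, Module.Projective S (F i)) ∧
    Function.Surjective e ∧ LinearMap.range (d 0) = LinearMap.ker e ∧
    (∀ i, LinearMap.range (d (i+1)) = LinearMap.ker (d i)) ∧
    (match n with
      | 0 => Nonempty (T ≃ₗ[S] TensorProduct S M N)
      | (j+1) => Nonempty (T ≃ₗ[S]
          subquot (LinearMap.ker (LinearMap.rTensor (↥N) (d j)))
            (LinearMap.range (LinearMap.rTensor (↥N) (d (j+1))))))

/-- `idLE n M` : the injective dimension of `M` is at most `n`. -/
def idLE (S : Type u) [CommRing S] : ℕ → ModuleCat.{u} S → Prop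
  | 0, M => Module.Injective S M
  | n+1, M => ∃ (I C : ModuleCat.{u} S) (f : M →ₗ[S] I) (g : I →ₗ[S] C),
      IsSES f g ∧ Module.Injective S I ∧ idLE S n C

/-- `PD_0^n(R)` over a local ring: modules of projective dimension at most `n` that are
free on the punctured spectrum. -/
def PD0n [IsLocalRing R] (n : ℕ) : Set (ModuleCat.{u} R) :=
  {M | Module.Finite R M ∧ pdLE R n M ∧
    ∀ p : PrimeSpectrum R, p.asIdeal ≠ IsLocalRing.maximalIdeal R →
      Module.Free (Localization.AtPrime p.asIdeal) (LocalizedModule p.asIdeal.primeCompl M)}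

/-- `PD_0(R)` over a local ring: modules of finite projective dimension that are
free on the punctured spectrum. -/
def PD0 [IsLocalRing R] : Set (ModuleCat.{u} R) :=
  {M | Module.Finite R M ∧ (∃ n : ℕ, pdLE R n M) ∧
    ∀ p : PrimeSpectrum R, p.asIdeal ≠ IsLocalRing.maximalIdeal R →
      Module.Free (Localization.AtPrime p.asIdeal) (LocalizedModule p.asIdeal.primeCompl M)}

/-- The residue field of a local ring, as a bundled module. -/
noncomputable abbrev residueMod (S : Type u) [CommRing S] [IsLocalRing S] : ModuleCat.{u} S :=
  ModuleCat.of S (IsLocalRing.ResidueField S)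


/-- The map `ψ` sending a grade consistent function to a subcategory of `PD(R)`. -/
def psiPd (f : PrimeSpectrum R → ℕ) : Set (ModuleCat.{u} R) :=
  {M | Module.Finite R M ∧
    ∀ p : PrimeSpectrum R, localPdim R p M ≤ ((f p : ℕ∞) : WithBot ℕ∞)}

/-! ### Projective dimension, unbundled -/

/-- Projective dimension at most `j`. -/
def PD (A : Type u) [CommRing A] (j : ℕ) (M : Type u) [AddCommGroup M] [Module A M] : Prop :=
  HasProjectiveDimensionLE (ModuleCat.of A M) j

section PDbasics

variable {A : Type u} [CommRing A] {K P M N : Type u} [AddCommGroup K] [Module A K]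
  [AddCommGroup P] [Module A P] [AddCommGroup M] [Module A M] [AddCommGroup N] [Module A N]

lemma IsSES.exact {f : K →ₗ[A] P} {g : P →ₗ[A] M} (h : IsSES f g) : Function.Exact f g :=
  LinearMap.exact_iff.2 h.2.2.symm

lemma IsSES.ker {g : P →ₗ[A] M} (hg : Function.Surjective g) :
    IsSES (LinearMap.ker g).subtype g :=
  ⟨Subtype.val_injective, hg, by simp⟩

/-- The short complex of a short exact sequence. -/
def IsSES.sc {f : K →ₗ[A] P} {g : P →ₗ[A] M} (h : IsSES f g) : ShortComplex (ModuleCat.{u} A) :=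
  ShortComplex.mk (ModuleCat.ofHom f) (ModuleCat.ofHom g) (by
    ext x
    exact h.exact.apply_apply_eq_zero x)

lemma IsSES.sc_exact {f : K →ₗ[A] P} {g : P →ₗ[A] M} (h : IsSES f g) : h.sc.ShortExact where
  exact := by
    rw [ShortComplex.ShortExact.moduleCat_exact_iff_function_exact]
    exact h.exact
  mono_f := (ModuleCat.mono_iff_injective _).2 h.1
  epi_g := (ModuleCat.epi_iff_surjective _).2 h.2.1

lemma PD_zero_iff : PD A 0 M ↔ Module.Projective A M := by
  unfold PD
  rw [← projective_iff_hasProjectiveDimensionLE_zero]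
  exact (IsProjective.iff_projective M).symm

lemma PD_mono {i j : ℕ} (h : i ≤ j) (hM : PD A i M) : PD A j M :=
  haveI : HasProjectiveDimensionLT (ModuleCat.of A M) (i+1) := hM
  hasProjectiveDimensionLT_of_ge _ (i+1) (j+1) (by omega)

lemma PD_retract {j : ℕ} (i : M →ₗ[A] N) (r : N →ₗ[A] M) (h : ∀ x, r (i x) = x) (hN : PD A j N) :
    PD A j M := by
  have R : Retract (ModuleCat.of A M) (ModuleCat.of A N) :=
    ⟨ModuleCat.ofHom i, ModuleCat.ofHom r, by ext x; exact h x⟩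
  haveI : HasProjectiveDimensionLT (ModuleCat.of A N) (j+1) := hN
  exact R.hasProjectiveDimensionLT (j+1)

lemma PD_equiv {j : ℕ} (e : M ≃ₗ[A] N) (hM : PD A j M) : PD A j N :=
  PD_retract e.symm.toLinearMap e.toLinearMap (by simp) hM

lemma PD_ext {j : ℕ} {f : K →ₗ[A] P} {g : P →ₗ[A] M} (h : IsSES f g) (hK : PD A j K)
    (hM : PD A j M) : PD A j P :=
  h.sc_exact.hasProjectiveDimensionLT_X₂ (j+1) hK hM

lemma PD_right {j : ℕ} {f : K →ₗ[A] P} {g : P →ₗ[A] M} (h : IsSES f g) (hK : PD A j K)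
    (hP : PD A (j+1) P) : PD A (j+1) M :=
  h.sc_exact.hasProjectiveDimensionLT_X₃ (j+1) hK hP

lemma PD_left {j : ℕ} {f : K →ₗ[A] P} {g : P →ₗ[A] M} (h : IsSES f g) (hP : PD A j P)
    (hM : PD A (j+1) M) : PD A j K :=
  h.sc_exact.hasProjectiveDimensionLT_X₁ (j+1) hP hM

lemma PD_of_projective {j : ℕ} [Module.Projective A M] : PD A j M :=
  PD_mono (Nat.zero_le j) (PD_zero_iff.2 ‹_›)

lemma PD_left' {j : ℕ} {f : K →ₗ[A] P} {g : P →ₗ[A] M} (h : IsSES f g) (hP : PD A j P)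
    (hM : PD A j M) : PD A j K :=
  PD_left h hP (PD_mono (Nat.le_succ j) hM)

lemma PD_prod {j : ℕ} (hM : PD A j M) (hN : PD A j N) : PD A j (M × N) :=
  PD_ext (f := LinearMap.inl A M N) (g := LinearMap.snd A M N)
    ⟨LinearMap.inl_injective, LinearMap.snd_surjective, LinearMap.range_inl A M N⟩ hM hN

lemma PD_subsingleton {j : ℕ} [Subsingleton M] : PD A j M :=
  haveI : Module.Projective A M := Module.Projective.of_free
  PD_of_projective

lemma pdLE_iff [IsNoetherianRing A] (j : ℕ) (M : ModuleCat.{u} A) (hM : Module.Finite A M) :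
    pdLE A j M ↔ PD A j M := by
  induction j generalizing M with
  | zero => exact PD_zero_iff.symm
  | succ j ih =>
    constructor
    · rintro ⟨K, P, f, g, hP, hP', h, hK⟩
      have : Module.Finite A K := Module.Finite.of_injective f h.1
      exact PD_right h ((ih K this).1 hK) PD_of_projective
    · intro h
      obtain ⟨n, g, hg⟩ := Module.Finite.exists_fin' A M
      refine ⟨ModuleCat.of A (LinearMap.ker g), ModuleCat.of A (Fin n → A), (LinearMap.ker g).subtype,
        g, inferInstanceAs (Module.Finite A (Fin n → A)),
        inferInstanceAs (Module.Projective A (Fin n → A)), IsSES.ker hg, ?_⟩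
      refine (ih _ (inferInstanceAs (Module.Finite A (LinearMap.ker g)))).2 ?_
      exact PD_left (IsSES.ker hg) PD_of_projective h

lemma pdim_le_iff [IsNoetherianRing A] (j : ℕ) (M : ModuleCat.{u} A) (hM : Module.Finite A M) :
    pdim A M ≤ ((j : ℕ∞) : WithBot ℕ∞) ↔ PD A j M := by
  unfold pdim
  constructor
  · intro h
    have hne : {x : WithBot ℕ∞ | (x = ⊥ ∧ Subsingleton M) ∨
        ∃ n : ℕ, x = (n : ℕ∞) ∧ pdLE A n M}.Nonempty := by
      by_contra hne
      rw [Set.not_nonempty_iff_eq_empty] at hne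
      rw [hne, sInf_empty] at h
      have h2 : ((⊤ : ℕ∞) : WithBot ℕ∞) ≤ ((j : ℕ∞) : WithBot ℕ∞) := h
      rw [WithBot.coe_le_coe] at h2
      exact absurd h2 (by simp)
    have hmem := csInf_mem hne
    rcases hmem with ⟨h1, h2⟩ | ⟨n, h1, h2⟩
    · exact PD_subsingleton
    · rw [h1] at h
      have : n ≤ j := by exact_mod_cast h
      exact PD_mono this ((pdLE_iff n M hM).1 h2)
  · intro h
    exact sInf_le (Or.inr ⟨j, rfl, (pdLE_iff j M hM).2 h⟩)

instance finite_loc (p : PrimeSpectrum A) (M : Type u) [AddCommGroup M] [Module A M]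
    [Module.Finite A M] :
    Module.Finite (Localization.AtPrime p.asIdeal) (LocalizedModule p.asIdeal.primeCompl M) :=
  Module.Finite.of_isLocalizedModule p.asIdeal.primeCompl
    (LocalizedModule.mkLinearMap p.asIdeal.primeCompl M)

/-- `pd` at a prime. -/
def LPD (p : PrimeSpectrum A) (j : ℕ) (M : Type u) [AddCommGroup M] [Module A M] : Prop :=
  PD (Localization.AtPrime p.asIdeal) j (LocalizedModule p.asIdeal.primeCompl M)

lemma localPdim_le_iff [IsNoetherianRing A] (p : PrimeSpectrum A) (j : ℕ) (M : ModuleCat.{u} A)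
    (hM : Module.Finite A M) :
    localPdim A p M ≤ ((j : ℕ∞) : WithBot ℕ∞) ↔ LPD p j M :=
  haveI : IsNoetherianRing (Localization.AtPrime p.asIdeal) :=
    IsLocalization.isNoetherianRing p.asIdeal.primeCompl _ inferInstance
  pdim_le_iff j _ (finite_loc p M)

/-- localization of a linear map -/
noncomputable abbrev locMap (S : Submonoid A) (f : M →ₗ[A] N) :
    LocalizedModule S M →ₗ[Localization S] LocalizedModule S N :=
  LocalizedModule.map S f

lemma IsSES.loc (S : Submonoid A) {f : K →ₗ[A] P} {g : P →ₗ[A] M} (h : IsSES f g) :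
    IsSES (locMap S f) (locMap S g) :=
by
  have h1 : Function.Exact (locMap S f) (locMap S g) := LocalizedModule.map_exact S f g h.exact
  exact ⟨LocalizedModule.map_injective S f h.1, LocalizedModule.map_surjective S g h.2.1,
   (LinearMap.exact_iff.1 h1).symm⟩

lemma LPD_ext {p : PrimeSpectrum A} {j : ℕ} {f : K →ₗ[A] P} {g : P →ₗ[A] M} (h : IsSES f g)
    (hK : LPD p j K) (hM : LPD p j M) : LPD p j P :=
  PD_ext (h.loc _) hK hM

lemma LPD_right {p : PrimeSpectrum A} {j : ℕ} {f : K →ₗ[A] P} {g : P →ₗ[A] M} (h : IsSES f g)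
    (hK : LPD p j K) (hP : LPD p (j+1) P) : LPD p (j+1) M :=
  PD_right (h.loc _) hK hP

lemma LPD_left {p : PrimeSpectrum A} {j : ℕ} {f : K →ₗ[A] P} {g : P →ₗ[A] M} (h : IsSES f g)
    (hP : LPD p j P) (hM : LPD p (j+1) M) : LPD p j K :=
  PD_left (h.loc _) hP hM

lemma LPD_mono {p : PrimeSpectrum A} {i j : ℕ} (h : i ≤ j) (hM : LPD p i M) : LPD p j M :=
  PD_mono h hM

lemma LPD_left' {p : PrimeSpectrum A} {j : ℕ} {f : K →ₗ[A] P} {g : P →ₗ[A] M} (h : IsSES f g)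
    (hP : LPD p j P) (hM : LPD p j M) : LPD p j K :=
  PD_left' (h.loc _) hP hM

lemma LPD_of_projective {p : PrimeSpectrum A} {j : ℕ} [Module.Projective A M] : LPD p j M := by
  haveI : Module.Projective (Localization.AtPrime p.asIdeal)
    (LocalizedModule p.asIdeal.primeCompl M) :=
    Module.projective_of_isLocalizedModule p.asIdeal.primeCompl
      (LocalizedModule.mkLinearMap p.asIdeal.primeCompl M)
  exact PD_of_projective

lemma LPD_retract {p : PrimeSpectrum A} {j : ℕ} (i : M →ₗ[A] N) (r : N →ₗ[A] M)
    (h : ∀ x, r (i x) = x) (hN : LPD p j N) : LPD p j M := by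
  refine PD_retract (locMap _ i) (locMap _ r) (fun x => ?_) hN
  induction x using LocalizedModule.induction_on with
  | h m s => simp [h]

end PDbasics

/-! ### Resolving subcategories, unbundled -/

/-- Membership of an unbundled module. -/
def IsIn {A : Type u} [CommRing A] (𝒳 : Set (ModuleCat.{u} A)) (M : Type u) [AddCommGroup M]
    [Module A M] : Prop := ModuleCat.of A M ∈ 𝒳

section Resolving

variable {A : Type u} [CommRing A] {K P M N F X : Type u} [AddCommGroup K] [Module A K]
  [AddCommGroup P] [Module A P] [AddCommGroup M] [Module A M] [AddCommGroup N] [Module A N]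
  [AddCommGroup F] [Module A F] [AddCommGroup X] [Module A X]
  {𝒳 : Set (ModuleCat.{u} A)}

/-- A retract splits off as a direct factor. -/
def retractEquiv (i : M →ₗ[A] N) (r : N →ₗ[A] M) (h : ∀ x, r (i x) = x) :
    N ≃ₗ[A] (M × LinearMap.ker r) where
  toFun n := (r n, ⟨n - i (r n), by simp [h]⟩)
  invFun z := i z.1 + z.2
  map_add' a b := by
    ext
    · simp
    · simp
      abel
  map_smul' a b := by
    ext
    · simp
    · simp [smul_sub]
  left_inv a := by simp
  right_inv z := by
    have := z.2.2
    rw [LinearMap.mem_ker] at this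
    ext
    · simp [h, this]
    · simp [h, this]

lemma IsResolving.finite (h : IsResolving A 𝒳) (hM : IsIn 𝒳 M) : Module.Finite A M := h.fg _ hM

lemma IsResolving.equiv (h : IsResolving A 𝒳) (e : M ≃ₗ[A] N) (hM : IsIn 𝒳 M) : IsIn 𝒳 N :=
  h.iso_closed (ModuleCat.of A M) (ModuleCat.of A N) ⟨e⟩ hM

lemma IsResolving.proj (h : IsResolving A 𝒳) [Module.Finite A M] [Module.Projective A M] :
    IsIn 𝒳 M := h.proj_mem (ModuleCat.of A M) ‹_› ‹_›

lemma IsResolving.ext (h : IsResolving A 𝒳) {f : K →ₗ[A] P} {g : P →ₗ[A] M} (hs : IsSES f g)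
    (hK : IsIn 𝒳 K) (hM : IsIn 𝒳 M) : IsIn 𝒳 P :=
  h.ext_closed (ModuleCat.of A K) (ModuleCat.of A P) (ModuleCat.of A M) f g hs hK hM

lemma IsResolving.syz [IsNoetherianRing A] (h : IsResolving A 𝒳) {f : K →ₗ[A] P} {g : P →ₗ[A] M}
    (hs : IsSES f g) [Module.Finite A P] [Module.Projective A P] (hM : IsIn 𝒳 M) : IsIn 𝒳 K :=
  h.syzygy_closed (ModuleCat.of A K) (ModuleCat.of A P) (ModuleCat.of A M) f g hs
    (Module.Finite.of_injective f hs.1) ‹_› ‹_› hM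

lemma IsResolving.retract (h : IsResolving A 𝒳) (i : M →ₗ[A] N) (r : N →ₗ[A] M)
    (hr : ∀ x, r (i x) = x) (hN : IsIn 𝒳 N) : IsIn 𝒳 M :=
  h.summand_closed (ModuleCat.of A M) (ModuleCat.of A (LinearMap.ker r))
    (h.equiv (retractEquiv i r hr) hN)

lemma IsSES.prod : IsSES (LinearMap.inl A M N) (LinearMap.snd A M N) :=
  ⟨LinearMap.inl_injective, LinearMap.snd_surjective, LinearMap.range_inl A M N⟩

lemma IsResolving.prod (h : IsResolving A 𝒳) (hM : IsIn 𝒳 M) (hN : IsIn 𝒳 N) : IsIn 𝒳 (M × N) :=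
  h.ext IsSES.prod hM hN

lemma IsResolving.fst (h : IsResolving A 𝒳) (hM : IsIn 𝒳 (M × N)) : IsIn 𝒳 M :=
  h.summand_closed (ModuleCat.of A M) (ModuleCat.of A N) hM

/-! ### The stable annihilator -/

/-- multiplication by `t` on `M` factors through `X` -/
def Fac (X : Type u) [AddCommGroup X] [Module A X] (M : Type u) [AddCommGroup M] [Module A M]
    (t : A) : Prop := ∃ (s : M →ₗ[A] X) (f : X →ₗ[A] M), ∀ m, f (s m) = t • m

lemma Fac.smul {t : A} (h : Fac X M t) (a : A) : Fac X M (a * t) := by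
  obtain ⟨s, f, h⟩ := h
  exact ⟨s, a • f, fun m => by simp [h, mul_smul]⟩

lemma Fac.add {s t : A} (h : Fac X M s) (h' : Fac N M t) : Fac (X × N) M (s + t) := by
  obtain ⟨a, f, h⟩ := h
  obtain ⟨b, g, h'⟩ := h'
  exact ⟨a.prod b, f.coprod g, fun m => by simp [h, h', add_smul]⟩

lemma Fac.trans {t : A} (h : Fac X M t) (i : X →ₗ[A] N) (r : N →ₗ[A] X) (hr : ∀ x, r (i x) = x) :
    Fac N M t := by
  obtain ⟨a, f, h⟩ := h
  exact ⟨i ∘ₗ a, f ∘ₗ r, fun m => by simp [h, hr]⟩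

lemma Fac.free {t : A} [Module.Finite A X] [Module.Projective A X] (h : Fac X M t) :
    ∃ n : ℕ, Fac (Fin n → A) M t := by
  obtain ⟨n, g, hg⟩ := Module.Finite.exists_fin' A X
  obtain ⟨s, hs⟩ := Module.projective_lifting_property g LinearMap.id hg
  exact ⟨n, h.trans s g (fun x => LinearMap.congr_fun hs x)⟩

/-- The stable annihilator: multiplications factoring through a finite free module. -/
def J (A : Type u) [CommRing A] (M : Type u) [AddCommGroup M] [Module A M] : Ideal A where
  carrier := {t | ∃ n : ℕ, Fac (Fin n → A) M t}
  zero_mem' := ⟨0, 0, 0, by simp⟩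
  add_mem' := by
    rintro a b ⟨n, h⟩ ⟨m, h'⟩
    exact (h.add h').free
  smul_mem' := by
    rintro a b ⟨n, h⟩
    exact ⟨n, h.smul a⟩

lemma Fac.mem {t : A} [Module.Finite A X] [Module.Projective A X] (h : Fac X M t) : t ∈ J A M :=
  h.free

lemma J_lift {t : A} (h : t ∈ J A M) (π : F →ₗ[A] M) (hπ : Function.Surjective π) :
    ∃ δ : M →ₗ[A] F, ∀ m, π (δ m) = t • m := by
  obtain ⟨n, s, f, h⟩ := h
  obtain ⟨g, hg⟩ := Module.projective_lifting_property π f hπ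
  refine ⟨g ∘ₗ s, fun m => ?_⟩
  rw [← h]
  exact LinearMap.congr_fun hg (s m)

lemma J_of_lift [Module.Finite A F] [Module.Projective A F] {t : A} (π : F →ₗ[A] M)
    (δ : M →ₗ[A] F) (h : ∀ m, π (δ m) = t • m) : t ∈ J A M :=
  Fac.mem (X := F) ⟨δ, π, h⟩

lemma J_proj_iff [Module.Finite A M] : J A M = ⊤ ↔ Module.Projective A M := by
  rw [Ideal.eq_top_iff_one]
  constructor
  · rintro ⟨n, s, f, h⟩
    exact Module.Projective.of_split s f (by ext m; simp [h])
  · intro h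
    exact Fac.mem (X := M) ⟨LinearMap.id, LinearMap.id, by simp⟩

lemma J_equiv (e : M ≃ₗ[A] N) : J A M ≤ J A N := by
  rintro t ⟨n, s, f, h⟩
  exact ⟨n, s ∘ₗ e.symm.toLinearMap, e.toLinearMap ∘ₗ f, fun m => by simp [h]⟩

lemma J_retract (i : M →ₗ[A] N) (r : N →ₗ[A] M) (hr : ∀ x, r (i x) = x) : J A N ≤ J A M := by
  rintro t ⟨n, s, f, h⟩
  exact ⟨n, s ∘ₗ i, r ∘ₗ f, fun m => by simp [h, hr]⟩

lemma J_prod : J A M ⊓ J A N ≤ J A (M × N) := by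
  rintro t ⟨⟨n, s, f, h⟩, ⟨n', s', f', h'⟩⟩
  exact Fac.mem (X := (Fin n → A) × (Fin n' → A)) ⟨s.prodMap s', f.prodMap f', fun m => by
    ext <;> simp [h', h]⟩

/-- stable annihilator of a syzygy -/
lemma J_syz [Module.Finite A P] [Module.Projective A P] {f : K →ₗ[A] P} {g : P →ₗ[A] M}
    (hs : IsSES f g) : J A M ≤ J A K := by
  intro t ht
  obtain ⟨δ, hδ⟩ := J_lift ht g hs.2.1
  have hk : ∀ p, (t • LinearMap.id - δ ∘ₗ g : P →ₗ[A] P) p ∈ LinearMap.range f := by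
    intro p
    rw [hs.2.2]
    simp [hδ]
  let e := LinearEquiv.ofInjective f hs.1
  refine Fac.mem (X := P) ⟨f, e.symm.toLinearMap ∘ₗ
    (LinearMap.codRestrict _ (t • LinearMap.id - δ ∘ₗ g : P →ₗ[A] P) hk), fun k => ?_⟩
  apply hs.1
  have h0 : g (f k) = 0 := hs.exact.apply_apply_eq_zero k
  have h1 : ∀ y : LinearMap.range f, f (e.symm y) = y := fun y => by
    conv_rhs => rw [← e.apply_symm_apply y]
    rfl
  simp [h1, h0]

/-! ### The construction `E` -/

/-- `E π x = {(m, f) : x m + π f = 0}` -/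
def E (π : F →ₗ[A] M) (x : A) : Submodule A (M × F) :=
  LinearMap.ker (x • LinearMap.fst A M F + π ∘ₗ LinearMap.snd A M F)

lemma mem_E {π : F →ₗ[A] M} {x : A} {z : M × F} : z ∈ E π x ↔ x • z.1 + π z.2 = 0 := by
  simp [E]

/-- inclusion of the syzygy -/
def Ei (π : F →ₗ[A] M) (x : A) : LinearMap.ker π →ₗ[A] E π x :=
  LinearMap.codRestrict _ (LinearMap.inr A M F ∘ₗ (LinearMap.ker π).subtype)
    (fun k => by simp [mem_E])

/-- projection to the module -/
def Ep (π : F →ₗ[A] M) (x : A) : E π x →ₗ[A] M := LinearMap.fst A M F ∘ₗ (E π x).subtype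

@[simp] lemma Ei_coe (π : F →ₗ[A] M) (x : A) (k : LinearMap.ker π) :
    ((Ei π x k : E π x) : M × F) = (0, (k : F)) := rfl

@[simp] lemma Ep_apply (π : F →ₗ[A] M) (x : A) (z : E π x) : Ep π x z = z.1.1 := rfl

lemma E_ses (π : F →ₗ[A] M) (hπ : Function.Surjective π) (x : A) :
    IsSES (Ei π x) (Ep π x) := by
  refine ⟨?_, ?_, ?_⟩
  · intro a b h
    have := congrArg (fun z : E π x => z.1.2) h
    exact Subtype.ext this
  · intro m
    obtain ⟨f, hf⟩ := hπ (-(x • m))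
    exact ⟨⟨(m, f), by simp [mem_E, hf]⟩, rfl⟩
  · ext z
    constructor
    · rintro ⟨k, rfl⟩
      simp
    · intro h
      have h1 : z.1.1 = 0 := h
      have h2 := mem_E.1 z.2
      rw [h1] at h2
      refine ⟨⟨z.1.2, by simpa using h2⟩, ?_⟩
      apply Subtype.ext
      simp only [Ei_coe]
      ext
      · exact h1.symm
      · rfl

instance E_finite [IsNoetherianRing A] [Module.Finite A M] [Module.Finite A F] (π : F →ₗ[A] M)
    (x : A) : Module.Finite A (E π x) := inferInstance

lemma E_mem [IsNoetherianRing A] (h : IsResolving A 𝒳) [Module.Finite A F] [Module.Projective A F]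
    (π : F →ₗ[A] M) (hπ : Function.Surjective π) (x : A) (hM : IsIn 𝒳 M) : IsIn 𝒳 (E π x) :=
  h.ext (E_ses π hπ x) (h.syz (IsSES.ker hπ) hM) hM

lemma E_LPD [Module.Projective A F] (π : F →ₗ[A] M) (hπ : Function.Surjective π) (x : A)
    {p : PrimeSpectrum A} {j : ℕ} (hM : LPD p j M) : LPD p j (E π x) :=
  LPD_ext (E_ses π hπ x) (LPD_left' (IsSES.ker hπ) LPD_of_projective hM) hM

/-- Property (G). -/
lemma E_descend (h : IsResolving A 𝒳) (π : F →ₗ[A] M) (hπ : Function.Surjective π) (x : A)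
    (hX : IsIn 𝒳 X) (hfac : Fac X M x) (hE : IsIn 𝒳 (E π x)) : IsIn 𝒳 M := by
  obtain ⟨s, f, hs⟩ := hfac
  let W : Submodule A (X × (M × F)) := LinearMap.ker
    (f ∘ₗ LinearMap.fst A X (M × F) -
      (x • LinearMap.fst A M F + π ∘ₗ LinearMap.snd A M F) ∘ₗ LinearMap.snd A X (M × F))
  have mem_W : ∀ z : X × (M × F), z ∈ W ↔ f z.1 = x • z.2.1 + π z.2.2 := fun z => by
    simp [W, sub_eq_zero]
  let a : E π x →ₗ[A] W := LinearMap.codRestrict _ (LinearMap.inr A X (M × F) ∘ₗ (E π x).subtype)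
    (fun k => by
      rw [mem_W]
      have := mem_E.1 k.2
      simp [this])
  let b : W →ₗ[A] X := LinearMap.fst A X (M × F) ∘ₗ W.subtype
  have hW : IsSES a b := by
    refine ⟨?_, ?_, ?_⟩
    · intro u v huv
      exact Subtype.ext (congrArg (fun z : W => z.1.2) huv)
    · intro y
      obtain ⟨g, hg⟩ := hπ (f y)
      exact ⟨⟨(y, (0, g)), by simp [mem_W, hg]⟩, rfl⟩
    · ext z
      constructor
      · rintro ⟨k, rfl⟩
        rfl
      · intro hz
        have h1 : z.1.1 = 0 := hz
        have h2 := (mem_W _).1 z.2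
        rw [h1, map_zero] at h2
        refine ⟨⟨z.1.2, mem_E.2 h2.symm⟩, ?_⟩
        apply Subtype.ext
        exact Prod.ext h1.symm rfl
  refine h.retract (N := W) (LinearMap.codRestrict W (s.prod (LinearMap.inl A M F))
    (fun m => by simp [mem_W, hs])) (LinearMap.fst A M F ∘ₗ LinearMap.snd A X (M × F) ∘ₗ W.subtype)
    (fun m => rfl) (h.ext hW hE hX)

/-- Property (H). -/
lemma E_mul (h : IsResolving A 𝒳) (π : F →ₗ[A] M) (hπ : Function.Surjective π) (x y : A)
    (hx : IsIn 𝒳 (E π x)) (hy : IsIn 𝒳 (E π y)) : IsIn 𝒳 (E π (x * y)) := by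
  let W : Submodule A (M × (F × F)) := LinearMap.ker
    (x • (y • LinearMap.fst A M (F × F) +
      π ∘ₗ LinearMap.snd A F F ∘ₗ LinearMap.snd A M (F × F)) +
      π ∘ₗ LinearMap.fst A F F ∘ₗ LinearMap.snd A M (F × F))
  have mem_W : ∀ z : M × (F × F), z ∈ W ↔ x • (y • z.1 + π z.2.2) + π z.2.1 = 0 := fun z => by
    simp [W]
  let b : W →ₗ[A] E π x := LinearMap.codRestrict _
    (((y • LinearMap.fst A M (F × F) +
      π ∘ₗ LinearMap.snd A F F ∘ₗ LinearMap.snd A M (F × F)).prod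
      (LinearMap.fst A F F ∘ₗ LinearMap.snd A M (F × F))) ∘ₗ W.subtype) (fun z => by
        rw [mem_E]
        exact (mem_W _).1 z.2)
  let a : E π y →ₗ[A] W := LinearMap.codRestrict _
    (((LinearMap.fst A M F).prod ((0 : M × F →ₗ[A] F).prod (LinearMap.snd A M F))) ∘ₗ
      (E π y).subtype) (fun z => by
        rw [mem_W]
        have := mem_E.1 z.2
        simp [this])
  have hb : ∀ z : W, (b z).1 = (y • z.1.1 + π z.1.2.2, z.1.2.1) := fun z => rfl
  have ha : ∀ z : E π y, (a z).1 = (z.1.1, (0, z.1.2)) := fun z => rfl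
  have hW : IsSES a b := by
    refine ⟨?_, ?_, ?_⟩
    · intro u v huv
      have := congrArg (fun z : W => z.1) huv
      simp only [ha] at this
      apply Subtype.ext
      simp only [Prod.mk.injEq] at this
      exact Prod.ext this.1 this.2.2
    · intro z
      obtain ⟨g, hg⟩ := hπ z.1.1
      refine ⟨⟨(0, (z.1.2, g)), ?_⟩, ?_⟩
      · rw [mem_W]
        have := mem_E.1 z.2
        simp [hg, this]
      · apply Subtype.ext
        rw [hb]
        simp [hg]
    · ext z
      constructor
      · rintro ⟨k, rfl⟩
        rw [LinearMap.mem_ker]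
        apply Subtype.ext
        rw [hb, ha]
        have := mem_E.1 k.2
        simp [this]
      · intro hz
        have h1 : (b z).1 = 0 := by
          rw [LinearMap.mem_ker.1 hz]; rfl
        rw [hb, Prod.mk_eq_zero] at h1
        refine ⟨⟨(z.1.1, z.1.2.2), mem_E.2 h1.1⟩, ?_⟩
        apply Subtype.ext
        rw [ha]
        exact Prod.ext rfl (Prod.ext h1.2.symm rfl)
  refine h.retract (N := W) (LinearMap.codRestrict W
    (((LinearMap.fst A M F).prod ((LinearMap.snd A M F).prod 0)) ∘ₗ (E π (x * y)).subtype)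
    (fun z => by
      rw [mem_W]
      have := mem_E.1 z.2
      simpa [mul_smul] using this))
    (LinearMap.codRestrict _ (((LinearMap.fst A M (F × F)).prod
      (LinearMap.fst A F F ∘ₗ LinearMap.snd A M (F × F) +
        x • LinearMap.snd A F F ∘ₗ LinearMap.snd A M (F × F))) ∘ₗ W.subtype) (fun z => by
        rw [mem_E]
        have := (mem_W _).1 z.2
        rw [← this]
        simp [mul_smul, smul_add]
        abel))
    (fun z => by
      apply Subtype.ext
      simp) (h.ext hW hy hx)

lemma E_pow (h : IsResolving A 𝒳) (π : F →ₗ[A] M) (hπ : Function.Surjective π) (x : A)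
    (hx : IsIn 𝒳 (E π x)) (a : ℕ) : IsIn 𝒳 (E π (x ^ (a + 1))) := by
  induction a with
  | zero =>
    rw [zero_add, pow_one]
    exact hx
  | succ a ih =>
    rw [pow_succ]
    exact E_mul h π hπ _ _ ih hx

/-- Property (G2). -/
lemma E_descend_rad (h : IsResolving A 𝒳) (π : F →ₗ[A] M) (hπ : Function.Surjective π) (x : A)
    (hx : x ∈ (J A M).radical) (hE : IsIn 𝒳 (E π x)) : IsIn 𝒳 M := by
  obtain ⟨a, ha⟩ := hx
  obtain ⟨n, hn⟩ := Ideal.mul_mem_left _ x ha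
  rw [← pow_succ'] at hn
  exact E_descend h π hπ _ h.proj hn (E_pow h π hπ x hE a)

lemma mem_J_E [Module.Finite A F] [Module.Projective A F] (π : F →ₗ[A] M) (x : A) :
    x ∈ J A (E π x) := by
  refine Fac.mem (X := F) ⟨LinearMap.snd A M F ∘ₗ (E π x).subtype,
    LinearMap.codRestrict _ ((-π).prod (x • LinearMap.id)) (fun f => by simp [mem_E]), fun z => ?_⟩
  apply Subtype.ext
  have := mem_E.1 z.2
  ext
  · simp [eq_neg_of_add_eq_zero_left this]
  · simp

lemma sq_mem_J_E [Module.Finite A F] [Module.Projective A F] (π : F →ₗ[A] M)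
    (hπ : Function.Surjective π) (x t : A) (ht : t ∈ J A M) :
    t * t ∈ J A (E π x) := by
  obtain ⟨δ, hδ⟩ := J_lift ht π hπ
  refine Fac.mem (X := F × F) ⟨((δ ∘ₗ LinearMap.fst A M F).prod
    (t • LinearMap.snd A M F + x • (δ ∘ₗ LinearMap.fst A M F))) ∘ₗ (E π x).subtype,
    LinearMap.codRestrict _ (((t • π) ∘ₗ LinearMap.fst A F F).prod
      (-(t * x) • LinearMap.fst A F F +
        (t • LinearMap.id - δ ∘ₗ π) ∘ₗ LinearMap.snd A F F)) (fun f => ?_), fun z => ?_⟩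
  · simp [mem_E, hδ, mul_smul, smul_comm x t]
  · apply Subtype.ext
    have := mem_E.1 z.2
    have h2 : π z.1.2 = - (x • z.1.1) := by
      rw [eq_neg_iff_add_eq_zero, add_comm]; exact this
    ext
    · simp [hδ, mul_smul]
    · simp [hδ, mul_smul, h2, smul_add, smul_comm x t]

lemma radJ_E [Module.Finite A F] [Module.Projective A F] (π : F →ₗ[A] M)
    (hπ : Function.Surjective π) (x : A) : (J A M).radical ⊔ Ideal.span {x} ≤ (J A (E π x)).radical := by
  refine sup_le ?_ ?_
  · rintro t ⟨n, hn⟩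
    refine ⟨n * 2, ?_⟩
    rw [pow_mul, sq]
    exact sq_mem_J_E π hπ x _ hn
  · rw [Ideal.span_singleton_le_iff_mem]
    exact Ideal.le_radical (mem_J_E π x)

end Resolving

section LocalE

variable {A : Type u} [CommRing A] {K P M N F X : Type u} [AddCommGroup K] [Module A K]
  [AddCommGroup P] [Module A P] [AddCommGroup M] [Module A M] [AddCommGroup N] [Module A N]
  [AddCommGroup F] [Module A F] [AddCommGroup X] [Module A X]

lemma E_proj_descend [IsNoetherianRing A] [IsLocalRing A] [Module.Finite A F]
    (π : F →ₗ[A] M) (hπ : Function.Surjective π) (x : A)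
    (hx : x ∈ IsLocalRing.maximalIdeal A) (hE : Module.Projective A (E π x)) :
    Module.Projective A M := by
  obtain ⟨l, hl⟩ := Module.projective_lifting_property π (Ep π x) hπ
  have hl' : ∀ z, π (l z) = z.1.1 := fun z => LinearMap.congr_fun hl z
  let θ : E π x →ₗ[A] LinearMap.ker π := LinearMap.codRestrict _
    (LinearMap.snd A M F ∘ₗ (E π x).subtype + x • l) (fun z => by
      have := mem_E.1 z.2
      rw [add_comm] at this
      simp [hl', this])
  let α : LinearMap.ker π →ₗ[A] LinearMap.ker π := θ ∘ₗ Ei π x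
  have hα : ∀ k, α k = k + x • ⟨l (Ei π x k), by simp [hl']⟩ := fun k => by
    apply Subtype.ext
    rfl
  have hsurj : Function.Surjective α := by
    rw [← LinearMap.range_eq_top, ← top_le_iff]
    refine Submodule.le_of_le_smul_of_le_jacobson_bot (I := IsLocalRing.maximalIdeal A)
      Module.Finite.fg_top (IsLocalRing.maximalIdeal_le_jacobson _) ?_
    intro k _
    have : k = α k + (-x) • ⟨l (Ei π x k), by simp [hl']⟩ := by
      rw [hα]
      simp
    rw [this]
    refine Submodule.add_mem_sup ⟨k, rfl⟩ (Submodule.smul_mem_smul ?_ trivial)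
    exact neg_mem hx
  have hinj : Function.Injective α := OrzechProperty.injective_of_surjective_endomorphism α hsurj
  let e := LinearEquiv.ofBijective α ⟨hinj, hsurj⟩
  have hses := E_ses π hπ x
  have h1 : ∃ l : E π x →ₗ[A] LinearMap.ker π, l ∘ₗ (Ei π x) = LinearMap.id := by
    refine ⟨e.symm.toLinearMap ∘ₗ θ, ?_⟩
    ext1 k
    exact e.symm_apply_apply k
  obtain ⟨s, hs⟩ := ((hses.exact.split_tfae hses.1 hses.2.1).out 1 0).1 h1
  exact Module.Projective.of_split s (Ep π x) hs

lemma E_PD_descend [IsNoetherianRing A] [IsLocalRing A] [Module.Finite A F] [Module.Projective A F]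
    (π : F →ₗ[A] M) (hπ : Function.Surjective π) (x : A)
    (hx : x ∈ IsLocalRing.maximalIdeal A) (j : ℕ) (hE : PD A j (E π x)) :
    PD A j M := by
  induction j generalizing M F with
  | zero =>
    rw [PD_zero_iff] at *
    exact E_proj_descend π hπ x hx hE
  | succ j ih =>
    obtain ⟨n, π', hπ'⟩ := Module.Finite.exists_fin' A (LinearMap.ker π)
    let c : ((Fin n → A) × F) →ₗ[A] E π x := LinearMap.codRestrict _
      ((π ∘ₗ LinearMap.snd A _ F).prod ((LinearMap.ker π).subtype ∘ₗ π' ∘ₗ LinearMap.fst A _ F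
        - x • LinearMap.snd A _ F)) (fun z => by simp [mem_E])
    have hc : ∀ z, (c z).1 = (π z.2, (π' z.1 : F) - x • z.2) := fun z => rfl
    have hcs : Function.Surjective c := by
      intro z
      obtain ⟨f, hf⟩ := hπ z.1.1
      obtain ⟨g, hg⟩ := hπ' ⟨z.1.2 + x • f, by
        have := mem_E.1 z.2
        rw [add_comm] at this
        simp [hf, this]⟩
      refine ⟨(g, f), ?_⟩
      apply Subtype.ext
      rw [hc]
      ext
      · simp [hf]
      · simp [hg]
    have h1 : PD A j (LinearMap.ker c) := PD_left (IsSES.ker hcs) PD_of_projective hE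
    have h2 : PD A j (E π' x) := by
      refine PD_retract (LinearMap.codRestrict _ ((LinearMap.snd A _ _).prod
        (-(LinearMap.ker π).subtype ∘ₗ LinearMap.fst A _ _) ∘ₗ (E π' x).subtype) (fun z => ?_))
        (LinearMap.codRestrict _ ((LinearMap.codRestrict (LinearMap.ker π)
          (-LinearMap.snd A _ _ ∘ₗ (LinearMap.ker c).subtype) (fun z => ?_)).prod
          (LinearMap.fst A _ _ ∘ₗ (LinearMap.ker c).subtype)) (fun z => ?_)) (fun z => ?_) h1
      · rw [LinearMap.mem_ker]
        apply Subtype.ext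
        rw [hc]
        have := congrArg (LinearMap.ker π).subtype (mem_E.1 z.2)
        rw [add_comm] at this
        ext
        · simp
        · simpa using this
      · have h3 : (c z.1).1 = 0 := by rw [LinearMap.mem_ker.1 z.2]; rfl
        rw [hc, Prod.mk_eq_zero] at h3
        simp [h3.1]
      · have h3 : (c z.1).1 = 0 := by rw [LinearMap.mem_ker.1 z.2]; rfl
        rw [hc, Prod.mk_eq_zero] at h3
        rw [mem_E]
        apply Subtype.ext
        rw [sub_eq_neg_add] at h3
        change x • (-z.1.2) + (π' z.1.1 : F) = 0
        simpa using h3.2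
      · apply Subtype.ext
        refine Prod.ext (Subtype.ext ?_) rfl
        exact neg_neg (z.1.1 : F)
    exact PD_right (IsSES.ker hπ) (ih π' hπ' h2) PD_of_projective

end LocalE

section Loc

variable {A : Type u} [CommRing A] {K P M N F X : Type u} [AddCommGroup K] [Module A K]
  [AddCommGroup P] [Module A P] [AddCommGroup M] [Module A M] [AddCommGroup N] [Module A N]
  [AddCommGroup F] [Module A F] [AddCommGroup X] [Module A X] (S : Submonoid A)

lemma loc_zero_iff {m : M} {s : S} : LocalizedModule.mk m s = 0 ↔ ∃ u : S, (u : A) • m = 0 := by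
  rw [← LocalizedModule.zero_mk s, LocalizedModule.mk_eq]
  constructor
  · rintro ⟨u, hu⟩
    refine ⟨u * s, ?_⟩
    simpa [mul_smul, Submonoid.smul_def] using hu
  · rintro ⟨u, hu⟩
    refine ⟨u, ?_⟩
    rw [smul_comm]
    simp [Submonoid.smul_def, hu]

lemma loc_add {m n : M} {s : S} :
    LocalizedModule.mk (m + n) s = LocalizedModule.mk m s + LocalizedModule.mk n s := by
  rw [LocalizedModule.mk_add_mk, LocalizedModule.mk_eq]
  refine ⟨1, ?_⟩
  simp [smul_add, mul_smul, Submonoid.smul_def]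

lemma loc_common (z : LocalizedModule S M) (w : LocalizedModule S N) :
    ∃ (m : M) (n : N) (s : S), z = LocalizedModule.mk m s ∧ w = LocalizedModule.mk n s := by
  induction z using LocalizedModule.induction_on with
  | h m s =>
    induction w using LocalizedModule.induction_on with
    | h n t =>
      refine ⟨t • m, s • n, s * t, ?_, ?_⟩
      · rw [mul_comm, LocalizedModule.mk_cancel_common_left]
      · rw [LocalizedModule.mk_cancel_common_left]

/-- `E` commutes with localization -/
lemma E_loc (π : F →ₗ[A] M) (x : A) :
    Nonempty (LocalizedModule S (E π x) ≃ₗ[Localization S]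
      E (locMap S π) (algebraMap A (Localization S) x)) := by
  let g : LocalizedModule S (E π x) →ₗ[Localization S]
      LocalizedModule S M × LocalizedModule S F :=
    (locMap S (LinearMap.fst A M F ∘ₗ (E π x).subtype)).prod
      (locMap S (LinearMap.snd A M F ∘ₗ (E π x).subtype))
  have hg : ∀ (z : E π x) (s : S), g (LocalizedModule.mk z s) =
      (LocalizedModule.mk z.1.1 s, LocalizedModule.mk z.1.2 s) := fun z s => by
    simp [g]
  have hg2 : ∀ z, g z ∈ E (locMap S π) (algebraMap A (Localization S) x) := fun z => by
    induction z using LocalizedModule.induction_on with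
    | h z s =>
      rw [hg, mem_E]
      have := mem_E.1 z.2
      simp only [LocalizedModule.map_mk, algebraMap_smul, LocalizedModule.smul'_mk]
      rw [← loc_add, this, LocalizedModule.zero_mk]
  refine ⟨LinearEquiv.ofBijective (LinearMap.codRestrict _ g hg2) ⟨?_, ?_⟩⟩
  · refine (injective_iff_map_eq_zero _).2 ?_
    intro z hz
    induction z using LocalizedModule.induction_on with
    | h z s =>
      have h1 : g (LocalizedModule.mk z s) = 0 := congrArg Subtype.val hz
      rw [hg, Prod.mk_eq_zero, loc_zero_iff, loc_zero_iff] at h1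
      obtain ⟨⟨u, hu⟩, ⟨v, hv⟩⟩ := h1
      rw [loc_zero_iff]
      refine ⟨u * v, ?_⟩
      apply Subtype.ext
      ext
      · simp [mul_comm (u : A), mul_smul, hu]
      · simp [mul_smul, hv]
  · rintro ⟨⟨z, w⟩, h⟩
    obtain ⟨m, f, s, rfl, rfl⟩ := loc_common S z w
    rw [mem_E] at h
    simp only [LocalizedModule.map_mk, algebraMap_smul, LocalizedModule.smul'_mk] at h
    rw [← loc_add, loc_zero_iff] at h
    obtain ⟨u, hu⟩ := h
    refine ⟨LocalizedModule.mk ⟨((u : A) • m, (u : A) • f), ?_⟩ (u * s), ?_⟩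
    · rw [mem_E, ← hu]
      simp [smul_comm x]
    · apply Subtype.ext
      rw [LinearMap.codRestrict_apply, hg]
      ext
      · exact LocalizedModule.mk_cancel_common_left u s m
      · exact LocalizedModule.mk_cancel_common_left u s f

lemma loc_lift [IsNoetherianRing A] [Module.Finite A M]
    (g : LocalizedModule S M →ₗ[Localization S] LocalizedModule S N) :
    ∃ (h : M →ₗ[A] N) (s : S), ∀ z, locMap S h z = (s : A) • g z := by
  have : Module.FinitePresentation A M := Module.finitePresentation_of_finite A M
  obtain ⟨h, s, hs⟩ := Module.FinitePresentation.exists_lift_of_isLocalizedModule S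
    (LocalizedModule.mkLinearMap S N) (g.restrictScalars A ∘ₗ LocalizedModule.mkLinearMap S M)
  refine ⟨h, s, fun z => ?_⟩
  induction z using LocalizedModule.induction_on with
  | h m t =>
    have h1 : LocalizedModule.mk (h m) 1 = (s : A) • g (LocalizedModule.mk m 1) :=
      LinearMap.congr_fun hs m
    have h2 : LocalizedModule.mk m t = Localization.mk 1 t • LocalizedModule.mk m (1 : S) := by
      rw [LocalizedModule.mk_smul_mk]; simp
    rw [h2, map_smul, map_smul, smul_comm (s : A), ← h1, LocalizedModule.map_mk]

lemma loc_eq [Module.Finite A M] (g₁ g₂ : M →ₗ[A] N) (h : ∀ z, locMap S g₁ z = locMap S g₂ z) :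
    ∃ u : S, ∀ m, (u : A) • g₁ m = (u : A) • g₂ m := by
  obtain ⟨u, hu⟩ := Module.Finite.exists_smul_of_comp_eq_of_isLocalizedModule S
    (LocalizedModule.mkLinearMap S N) g₁ g₂ (by
      ext m
      simpa using h (LocalizedModule.mk m 1))
  exact ⟨u, fun m => LinearMap.congr_fun hu m⟩

/-- spreading out a retract -/
lemma spread [IsNoetherianRing A] [Module.Finite A M] [Module.Finite A X]
    (i : LocalizedModule S M →ₗ[Localization S] LocalizedModule S X)
    (r : LocalizedModule S X →ₗ[Localization S] LocalizedModule S M) (hr : ∀ z, r (i z) = z) :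
    ∃ t ∈ S, Fac X M t := by
  obtain ⟨i', s, hs⟩ := loc_lift S i
  obtain ⟨r', s', hs'⟩ := loc_lift S r
  obtain ⟨u, hu⟩ := loc_eq S (r' ∘ₗ i') ((s * s' : A) • LinearMap.id) (fun z => by
    have h1 : locMap S (r' ∘ₗ i') z = locMap S r' (locMap S i' z) := by
      induction z using LocalizedModule.induction_on with
      | h m t => simp
    have h2 : locMap S ((s * s' : A) • LinearMap.id) z = (s * s' : A) • z := by
      induction z using LocalizedModule.induction_on with
      | h m t => simp [LocalizedModule.smul'_mk]
    rw [h1, h2, hs', hs, LinearMap.map_smul_of_tower, hr, ← mul_smul, mul_comm])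
  refine ⟨u * (s * s'), S.mul_mem u.2 (S.mul_mem s.2 s'.2), i', (u : A) • r', fun m => ?_⟩
  have := hu m
  simp only [LinearMap.comp_apply] at this
  simp [this, mul_smul]

lemma Fac.loc {t : A} (h : Fac X M t) :
    Fac (LocalizedModule S X) (LocalizedModule S M) (algebraMap A (Localization S) t) := by
  obtain ⟨s, f, h⟩ := h
  refine ⟨locMap S s, locMap S f, fun z => ?_⟩
  induction z using LocalizedModule.induction_on with
  | h m t => simp [h, LocalizedModule.smul'_mk]

lemma J_loc {t : A} (h : t ∈ J A M) :
    algebraMap A (Localization S) t ∈ J (Localization S) (LocalizedModule S M) := by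
  obtain ⟨n, h⟩ := h
  have : Module.Projective (Localization S) (LocalizedModule S (Fin n → A)) :=
    Module.projective_of_isLocalizedModule S (LocalizedModule.mkLinearMap S _)
  have : Module.Finite (Localization S) (LocalizedModule S (Fin n → A)) :=
    Module.Finite.of_isLocalizedModule S (LocalizedModule.mkLinearMap S _)
  exact (h.loc S).mem

lemma LPD_zero_iff [IsNoetherianRing A] [Module.Finite A M] (p : PrimeSpectrum A) :
    LPD p 0 M ↔ ¬ J A M ≤ p.asIdeal := by
  unfold LPD
  rw [PD_zero_iff]
  constructor
  · intro h hJ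
    obtain ⟨n, π, hπ⟩ := Module.Finite.exists_fin' A M
    obtain ⟨σ, hσ⟩ := Module.projective_lifting_property (locMap p.asIdeal.primeCompl π)
      LinearMap.id (LocalizedModule.map_surjective _ π hπ)
    obtain ⟨t, ht, hf⟩ := spread p.asIdeal.primeCompl σ (locMap _ π)
      (fun z => LinearMap.congr_fun hσ z)
    exact ht (hJ hf.mem)
  · intro h
    obtain ⟨t, ht, htp⟩ := SetLike.not_le_iff_exists.1 h
    rw [← J_proj_iff]
    refine Ideal.eq_top_of_isUnit_mem _ (J_loc _ ht) ?_
    exact IsLocalization.map_units _ (⟨t, htp⟩ : p.asIdeal.primeCompl)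

lemma LPD_gen [IsNoetherianRing A] [Module.Finite A M] {p q : PrimeSpectrum A}
    (hpq : p.asIdeal ≤ q.asIdeal) {j : ℕ} (h : LPD q j M) : LPD p j M := by
  induction j generalizing M with
  | zero =>
    rw [LPD_zero_iff] at *
    exact fun h' => h (h'.trans hpq)
  | succ j ih =>
    obtain ⟨n, π, hπ⟩ := Module.Finite.exists_fin' A M
    exact LPD_right (IsSES.ker hπ) (ih (LPD_left (IsSES.ker hπ) LPD_of_projective h))
      LPD_of_projective

lemma E_LPD_descend [IsNoetherianRing A] [Module.Finite A F] [Module.Projective A F]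
    (π : F →ₗ[A] M) (hπ : Function.Surjective π) (x : A) {p : PrimeSpectrum A}
    (hx : x ∈ p.asIdeal) (j : ℕ) (hE : LPD p j (E π x)) : LPD p j M := by
  have : IsNoetherianRing (Localization.AtPrime p.asIdeal) :=
    IsLocalization.isNoetherianRing p.asIdeal.primeCompl _ inferInstance
  have : Module.Projective (Localization.AtPrime p.asIdeal)
      (LocalizedModule p.asIdeal.primeCompl F) :=
    Module.projective_of_isLocalizedModule p.asIdeal.primeCompl (LocalizedModule.mkLinearMap _ _)
  obtain ⟨e⟩ := E_loc p.asIdeal.primeCompl π x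
  refine E_PD_descend (locMap p.asIdeal.primeCompl π) (LocalizedModule.map_surjective _ π hπ)
    (algebraMap _ _ x) ?_ j (PD_equiv e hE)
  exact (IsLocalization.AtPrime.to_map_mem_maximal_iff _ p.asIdeal x).2 hx

/-- iterate `E` along a finite set of elements -/
lemma E_iter [IsNoetherianRing A] [Module.Finite A M] (s : Finset A) :
    ∃ (Y : Type u) (_ : AddCommGroup Y) (_ : Module A Y), Module.Finite A Y ∧
      (∀ 𝒳 : Set (ModuleCat.{u} A), IsResolving A 𝒳 → IsIn 𝒳 M → IsIn 𝒳 Y) ∧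
      (∀ (p : PrimeSpectrum A) (j : ℕ), LPD p j M → LPD p j Y) ∧
      (∀ p : PrimeSpectrum A, (s : Set A) ⊆ p.asIdeal → ∀ j, LPD p j Y → LPD p j M) ∧
      (Ideal.span (s : Set A) ≤ (J A Y).radical) := by
  classical
  induction s using Finset.induction_on with
  | empty =>
    exact ⟨M, inferInstance, inferInstance, inferInstance, fun _ _ h => h, fun _ _ h => h,
      fun _ _ _ h => h, by simp⟩
  | insert x s hx ih =>
    obtain ⟨Y, _, _, h1, h2, h3, h4, h5⟩ := ih
    obtain ⟨n, π, hπ⟩ := Module.Finite.exists_fin' A Y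
    refine ⟨E π x, inferInstance, inferInstance, inferInstance,
      fun 𝒳 h𝒳 h => E_mem h𝒳 π hπ x (h2 𝒳 h𝒳 h), fun p j h => E_LPD π hπ x (h3 p j h),
      fun p hp j h => ?_, ?_⟩
    · rw [Finset.coe_insert, Set.insert_subset_iff] at hp
      exact h4 p hp.2 j (E_LPD_descend π hπ x hp.1 j h)
    · rw [Finset.coe_insert, Ideal.span_insert]
      refine (sup_le ?_ ?_).trans (radJ_E π hπ x)
      · exact le_sup_right
      · exact h5.trans le_sup_left

end Loc

/-! ### Reduction modulo a regular element -/

/-- `L` is the reduction of `Y` modulo `x`. -/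
def IsRed {S : Type u} [CommRing S] (x : S) {Y L : Type u} [AddCommGroup Y] [Module S Y]
    [AddCommGroup L] [Module S L] (q : Y →ₗ[S] L) : Prop :=
  Function.Surjective q ∧ ∀ y, q y = 0 ↔ ∃ y', y = x • y'

section Red

variable {S : Type u} [CommRing S] {x : S} {Y L Y' L' : Type u}
  [AddCommGroup Y] [Module S Y] [AddCommGroup Y'] [Module S Y']
  [AddCommGroup L] [Module S L] [Module (S ⧸ Ideal.span {x}) L]
  [IsScalarTower S (S ⧸ Ideal.span {x}) L]
  [AddCommGroup L'] [Module S L'] [Module (S ⧸ Ideal.span {x}) L']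
  [IsScalarTower S (S ⧸ Ideal.span {x}) L']

lemma red_map {q : Y →ₗ[S] L} {q' : Y' →ₗ[S] L'} (hq : IsRed x q) (hq' : IsRed x q')
    (f : Y →ₗ[S] Y') :
    ∃ g : L →ₗ[S ⧸ Ideal.span {x}] L', ∀ y, g (q y) = q' (f y) := by
  have hk : LinearMap.ker q ≤ LinearMap.ker (q' ∘ₗ f) := by
    intro y hy
    obtain ⟨y', rfl⟩ := (hq.2 y).1 hy
    rw [LinearMap.mem_ker, LinearMap.comp_apply, hq'.2]
    exact ⟨f y', by simp⟩
  let g : L →ₗ[S] L' := (LinearMap.ker q).liftQ (q' ∘ₗ f) hk ∘ₗ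
    (LinearMap.quotKerEquivOfSurjective q hq.1).symm.toLinearMap
  refine ⟨LinearMap.extendScalarsOfSurjective (Ideal.Quotient.mk_surjective) g, fun y => ?_⟩
  have : (LinearMap.quotKerEquivOfSurjective q hq.1).symm (q y) = Submodule.Quotient.mk y := by
    rw [LinearEquiv.symm_apply_eq]
    rfl
  change (LinearMap.ker q).liftQ (q' ∘ₗ f) hk
    ((LinearMap.quotKerEquivOfSurjective q hq.1).symm (q y)) = _
  rw [this]
  rfl

lemma red_equiv {q : Y →ₗ[S] L} {q' : Y →ₗ[S] L'} (hq : IsRed x q) (hq' : IsRed x q') :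
    Nonempty (L ≃ₗ[S ⧸ Ideal.span {x}] L') := by
  obtain ⟨g, hg⟩ := red_map hq hq' LinearMap.id
  obtain ⟨g', hg'⟩ := red_map hq' hq LinearMap.id
  refine ⟨LinearEquiv.ofLinearMap g g' ?_ ?_⟩
  · ext l
    obtain ⟨y, rfl⟩ := hq'.1 l
    simp [hg, hg']
  · ext l
    obtain ⟨y, rfl⟩ := hq.1 l
    simp [hg, hg']

open Pointwise in
lemma red_quot : IsRed x (Submodule.mkQ (x • (⊤ : Submodule S Y)) : Y →ₗ[S] QuotSMulTop x Y) := by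
  refine ⟨Submodule.mkQ_surjective _, fun y => ?_⟩
  rw [Submodule.mkQ_apply, Submodule.Quotient.mk_eq_zero, Submodule.mem_smul_pointwise_iff_exists]
  constructor
  · rintro ⟨b, _, h⟩
    exact ⟨b, h.symm⟩
  · rintro ⟨b, h⟩
    exact ⟨b, trivial, h.symm⟩

lemma red_pi (n : ℕ) : IsRed x
    ((Algebra.linearMap S (S ⧸ Ideal.span {x})).compLeft (Fin n)) := by
  refine ⟨fun v => ?_, fun v => ?_⟩
  · choose w hw using fun i => Ideal.Quotient.mk_surjective (v i)
    exact ⟨w, funext hw⟩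
  · constructor
    · intro h
      have : ∀ i, ∃ a, v i = x * a := fun i => by
        have h1 := congrFun h i
        have h2 : Ideal.Quotient.mk (Ideal.span {x}) (v i) = 0 := h1
        rw [Ideal.Quotient.eq_zero_iff_mem, Ideal.mem_span_singleton] at h2
        exact h2
      choose w hw using this
      exact ⟨w, funext hw⟩
    · rintro ⟨w, rfl⟩
      funext i
      change Ideal.Quotient.mk (Ideal.span {x}) (x * w i) = 0
      rw [Ideal.Quotient.eq_zero_iff_mem]
      exact Ideal.mul_mem_right _ _ (Ideal.mem_span_singleton_self x)

lemma quot_local [IsLocalRing S] (hx : x ∈ IsLocalRing.maximalIdeal S) : IsLocalRing (S ⧸ Ideal.span {x}) := by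
  have : Nontrivial (S ⧸ Ideal.span {x}) := by
    apply Ideal.Quotient.nontrivial_iff.2
    intro h
    rw [Ideal.span_singleton_eq_top] at h
    exact (IsLocalRing.mem_maximalIdeal x).1 hx h
  exact IsLocalRing.of_surjective' _ Ideal.Quotient.mk_surjective

variable [IsNoetherianRing S] [IsLocalRing S]

lemma red_proj_iff [Module.Finite S Y] (hx : x ∈ IsLocalRing.maximalIdeal S)
    (hY : IsSMulRegular Y x) {q : Y →ₗ[S] L} (hq : IsRed x q) :
    Module.Projective S Y ↔ Module.Projective (S ⧸ Ideal.span {x}) L := by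
  have := quot_local hx
  have : Module.FinitePresentation S Y := Module.finitePresentation_of_finite S Y
  have hfin : Module.Finite (S ⧸ Ideal.span {x}) L := by
    have : Module.Finite S L := Module.Finite.of_surjective q hq.1
    exact Module.Finite.of_restrictScalars_finite S _ L
  have : Module.FinitePresentation (S ⧸ Ideal.span {x}) L :=
    Module.finitePresentation_of_finite _ L
  obtain ⟨e⟩ := red_equiv hq (red_quot (Y := Y) (x := x))
  have key := Module.free_quotSMulTop_iff_free S Y (x := x)
    (IsLocalRing.maximalIdeal_le_jacobson _ hx) hY
  constructor
  · intro h
    have : Module.Free S Y := Module.free_of_flat_of_isLocalRing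
    have := key.2 this
    have : Module.Free (S ⧸ Ideal.span {x}) L := Module.Free.of_equiv e.symm
    infer_instance
  · intro h
    have : Module.Free (S ⧸ Ideal.span {x}) L := Module.free_of_flat_of_isLocalRing
    have := key.1 (Module.Free.of_equiv e)
    infer_instance

lemma red_PD_iff [Module.Finite S Y] (hx : x ∈ IsLocalRing.maximalIdeal S)
    (hS : IsSMulRegular S x) (hY : IsSMulRegular Y x) {q : Y →ₗ[S] L} (hq : IsRed x q) (j : ℕ) :
    PD S j Y ↔ PD (S ⧸ Ideal.span {x}) j L := by
  induction j generalizing Y L with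
  | zero =>
    rw [PD_zero_iff, PD_zero_iff]
    exact red_proj_iff hx hY hq
  | succ j ih =>
    obtain ⟨n, π, hπ⟩ := Module.Finite.exists_fin' S Y
    obtain ⟨g, hg⟩ := red_map (red_pi (x := x) n) hq π
    set ρ := ((Algebra.linearMap S (S ⧸ Ideal.span {x})).compLeft (Fin n))
    have hρ := red_pi (x := x) n
    have hgs : Function.Surjective g := by
      intro l
      obtain ⟨y, rfl⟩ := hq.1 l
      obtain ⟨f, rfl⟩ := hπ y
      exact ⟨_, hg f⟩
    have hF : IsSMulRegular (Fin n → S) x := IsSMulRegular.pi fun _ => hS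
    have hK : IsSMulRegular (LinearMap.ker π) x := by
      intro a b h
      apply Subtype.ext
      exact hF (congrArg Subtype.val h)
    let κ : LinearMap.ker π →ₗ[S] LinearMap.ker g :=
      { toFun := fun k => ⟨ρ k, by
          rw [LinearMap.mem_ker, hg, LinearMap.mem_ker.1 k.2, map_zero]⟩
        map_add' := fun a b => by
          apply Subtype.ext
          exact map_add ρ _ _
        map_smul' := fun a b => by
          apply Subtype.ext
          exact map_smul ρ _ _ }
    have hκ : IsRed x κ := by
      refine ⟨fun v => ?_, fun k => ?_⟩
      · obtain ⟨f, hf⟩ := hρ.1 v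
        have h1 : q (π f) = 0 := by
          rw [← hg, hf]
          exact v.2
        obtain ⟨y', hy'⟩ := (hq.2 _).1 h1
        obtain ⟨f', rfl⟩ := hπ y'
        refine ⟨⟨f - x • f', by simp [hy']⟩, ?_⟩
        apply Subtype.ext
        change ρ (f - x • f') = v
        rw [map_sub, hf, (hρ.2 (x • f')).2 ⟨f', rfl⟩, sub_zero]
      · have h1 : κ k = 0 ↔ ρ k = 0 := by
          rw [← Subtype.coe_inj]
          rfl
        rw [h1, hρ.2]
        constructor
        · rintro ⟨f', hf'⟩
          have h2 : π f' = 0 := by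
            apply hY
            have := LinearMap.mem_ker.1 k.2
            rw [hf', map_smul] at this
            simp [this]
          exact ⟨⟨f', h2⟩, Subtype.ext hf'⟩
        · rintro ⟨k', rfl⟩
          exact ⟨k', rfl⟩
    have key := ih hK hκ
    constructor
    · intro h
      exact PD_right (IsSES.ker hgs) (key.1 (PD_left (IsSES.ker hπ) PD_of_projective h))
        PD_of_projective
    · intro h
      exact PD_right (IsSES.ker hπ) (key.2 (PD_left (IsSES.ker hgs) PD_of_projective h))
        PD_of_projective

end Red

/-! ### Regular local rings -/

/-- Inductive form of regularity. -/
def Reg : ℕ → ∀ (S : Type u) [CommRing S], Prop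
  | 0, S, _ => IsField S
  | d + 1, S, _ => IsNoetherianRing S ∧ ∃ _ : IsLocalRing S, ∃ x ∈ IsLocalRing.maximalIdeal S,
      IsSMulRegular S x ∧ Reg d (S ⧸ Ideal.span {x})

lemma Reg.local {d : ℕ} {S : Type u} [CommRing S] (h : Reg d S) : IsLocalRing S := by
  cases d with
  | zero =>
    have h : IsField S := h
    let _ := h.toField
    infer_instance
  | succ d => exact h.2.1

lemma Reg.noeth {d : ℕ} {S : Type u} [CommRing S] (h : Reg d S) : IsNoetherianRing S := by
  cases d with
  | zero =>
    have h : IsField S := h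
    let _ := h.toField
    infer_instance
  | succ d => exact h.1

lemma Reg_of_regular_aux (d : ℕ) (S : Type u) [CommRing S] [IsLocalRing S] [IsNoetherianRing S]
    (s : Finset S) (hs : Ideal.span (s : Set S) = IsLocalRing.maximalIdeal S) (hd : s.card ≤ d)
    (hdim : (d : WithBot ℕ∞) ≤ ringKrullDim S) : Reg d S ∧ IsDomain S := by
  classical
  induction d generalizing S with
  | zero =>
    have : s = ∅ := by simpa using hd
    subst this
    have h : IsField S := by
      rw [IsLocalRing.isField_iff_maximalIdeal_eq, ← hs]
      simp
    exact ⟨h, h.isDomain⟩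
  | succ d ih =>
    set m := IsLocalRing.maximalIdeal S with hm
    have hmin : m ∉ minimalPrimes S := by
      rw [← Ideal.height_eq_zero_iff]
      intro h
      rw [← IsLocalRing.maximalIdeal_height_eq_ringKrullDim, ← hm, h] at hdim
      norm_cast at hdim
    have hm2 : ¬ m ≤ m * m := by
      intro h
      have h0 : m = ⊥ := by
        apply le_bot_iff.1
        refine Submodule.le_of_le_smul_of_le_jacobson_bot (I := m) (IsNoetherian.noetherian m)
          (IsLocalRing.maximalIdeal_le_jacobson _) ?_
        rw [bot_sup_eq]
        exact h
      apply hmin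
      rw [h0]
      have hp : (⊥ : Ideal S).IsPrime := by
        rw [← h0]
        infer_instance
      refine ⟨⟨hp, bot_le⟩, fun q _ _ => bot_le⟩
    obtain ⟨x, hxm, hx⟩ : ∃ x ∈ m, ∀ I ∈ insert (m * m) (minimalPrimes S), x ∉ I := by
      by_contra! hcon
      obtain ⟨I, hI, hle⟩ := (Ideal.subset_union_prime_finite (f := id) (I := m)
        (s := insert (m * m) (minimalPrimes S))
        ((minimalPrimes.finite_of_isNoetherianRing S).insert _) (m * m) (m * m) (by
          intro i hi h1 _
          rcases hi with rfl | hi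
          · exact absurd rfl h1
          · exact hi.1.1)).1 (by
          intro y hy
          obtain ⟨I, hI, hyI⟩ := hcon y hy
          simp only [Set.mem_iUnion]
          exact ⟨I, hI, hyI⟩)
      rcases hI with rfl | hI
      · exact hm2 hle
      · have : I = m := le_antisymm (IsLocalRing.le_maximalIdeal hI.1.1.ne_top) hle
        exact hmin (this ▸ hI)
    have hx2 : x ∉ m * m := hx _ (Set.mem_insert _ _)
    have hxmin : ∀ q ∈ minimalPrimes S, x ∉ q := fun q hq => hx q (Set.mem_insert_of_mem _ hq)
    have := quot_local hxm
    -- exchange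
    obtain ⟨y, hys, hy⟩ : ∃ y ∈ s, m ≤ Ideal.span (insert x (s.erase y : Set S)) := by
      rw [← hs] at hxm
      obtain ⟨a, ha⟩ := (Submodule.mem_span_finset' ).1 hxm
      obtain ⟨y, hyu⟩ : ∃ y : s, a y ∉ m := by
        by_contra! hcon
        apply hx2
        rw [← ha]
        refine Ideal.sum_mem _ fun i _ => ?_
        refine Ideal.mul_mem_mul (hcon i) ?_
        rw [← hs]
        exact Ideal.subset_span i.2
      have hu : IsUnit (a y) := by
        by_contra h
        exact hyu ((IsLocalRing.mem_maximalIdeal _).2 h)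
      refine ⟨y, y.2, ?_⟩
      rw [← hs, Ideal.span_le]
      intro z hz
      by_cases hzy : z = y
      · rw [hzy]
        rw [← Finset.add_sum_erase _ _ (Finset.mem_univ y)] at ha
        have h1 : a y * (y : S) ∈ Ideal.span (insert x (s.erase y : Set S)) := by
          have : a y * (y : S) = x - ∑ i ∈ Finset.univ.erase y, a i • (i : S) := by
            rw [← ha]
            simp
          rw [this]
          refine sub_mem (Ideal.subset_span (Set.mem_insert _ _)) (Ideal.sum_mem _ fun i hi => ?_)
          refine Ideal.mul_mem_left _ _ (Ideal.subset_span (Set.mem_insert_of_mem _ ?_))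
          have h2 := (Finset.mem_erase.1 hi).1
          simp only [Finset.coe_erase, Set.mem_sdiff, Finset.mem_coe, Set.mem_singleton_iff]
          exact ⟨i.2, fun h => h2 (Subtype.ext h)⟩
        obtain ⟨u, hu⟩ := hu
        have := Ideal.mul_mem_left _ (↑u⁻¹ : S) h1
        rwa [← hu, Units.inv_mul_cancel_left] at this
      · refine Ideal.subset_span (Set.mem_insert_of_mem _ ?_)
        simp only [Finset.coe_erase, Set.mem_sdiff, Finset.mem_coe, Set.mem_singleton_iff]
        exact ⟨hz, hzy⟩
    have hmem : ∀ z, Ideal.Quotient.mk (Ideal.span {x}) z ∈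
        IsLocalRing.maximalIdeal (S ⧸ Ideal.span {x}) ↔ z ∈ m := by
      intro z
      have := IsLocalHom.of_surjective (Ideal.Quotient.mk (Ideal.span {x}))
        Ideal.Quotient.mk_surjective
      rw [IsLocalRing.mem_maximalIdeal, hm, IsLocalRing.mem_maximalIdeal, mem_nonunits_iff,
        mem_nonunits_iff, isUnit_map_iff]
    have hdim2 : (d : WithBot ℕ∞) ≤ ringKrullDim (S ⧸ Ideal.span {x}) := by
      have h1 := ringKrullDim_le_ringKrullDim_quotient_add_card ({x} : Finset S) (by
        simp only [Finset.coe_singleton, Set.singleton_subset_iff, SetLike.mem_coe]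
        rw [IsLocalRing.ringJacobson_eq_maximalIdeal]
        exact hxm)
      have h3 : ringKrullDim (S ⧸ Ideal.span ((({x} : Finset S)) : Set S)) =
          ringKrullDim (S ⧸ Ideal.span {x}) :=
        ringKrullDim_eq_of_ringEquiv (Ideal.quotEquivOfEq (by simp))
      have h2 := hdim.trans h1
      rw [h3] at h2
      simp only [Finset.card_singleton, Nat.cast_one, Nat.cast_add] at h2
      exact ENat.WithBot.add_le_add_one_right_iff.1 h2
    obtain ⟨hreg, hdom⟩ := ih (S ⧸ Ideal.span {x})
      ((s.erase y).image (Ideal.Quotient.mk (Ideal.span {x}))) (by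
        rw [Finset.coe_image, ← Ideal.map_span]
        apply le_antisymm
        · rw [Ideal.map_le_iff_le_comap, Ideal.span_le]
          intro z hz
          rw [SetLike.mem_coe, Ideal.mem_comap, hmem, ← hs]
          exact Ideal.subset_span (Finset.mem_of_mem_erase (Finset.mem_coe.1 hz))
        · intro w hw
          obtain ⟨z, rfl⟩ := Ideal.Quotient.mk_surjective w
          rw [hmem] at hw
          have h1 := Ideal.mem_map_of_mem (Ideal.Quotient.mk (Ideal.span {x})) (hy hw)
          rw [Ideal.span_insert, Ideal.map_sup] at h1
          have h2 : Ideal.map (Ideal.Quotient.mk (Ideal.span {x})) (Ideal.span {x}) = ⊥ :=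
            Ideal.map_quotient_self _
          rwa [h2, bot_sup_eq] at h1)
      (Finset.card_image_le.trans (by rw [Finset.card_erase_of_mem hys]; omega)) hdim2
    have hprime : (Ideal.span {x}).IsPrime := (Ideal.Quotient.isDomain_iff_prime _).1 hdom
    obtain ⟨q, hq, hqle⟩ := Ideal.exists_minimalPrimes_le (I := ⊥) (J := Ideal.span {x}) bot_le
    have hqp : q.IsPrime := hq.1.1
    have hxq : x ∉ q := hxmin q hq
    have hq0 : q = ⊥ := by
      apply le_bot_iff.1
      refine Submodule.le_of_le_smul_of_le_jacobson_bot (I := m) (IsNoetherian.noetherian q)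
        (IsLocalRing.maximalIdeal_le_jacobson _) ?_
      rw [bot_sup_eq]
      intro z hz
      obtain ⟨c, rfl⟩ := Ideal.mem_span_singleton'.1 (hqle hz)
      have hc : c ∈ q := (hqp.mem_or_mem hz).resolve_right hxq
      rw [mul_comm]
      exact Submodule.smul_mem_smul hxm hc
    have hSd : IsDomain S := by
      rw [hq0] at hqp
      exact IsDomain.of_bot_isPrime S
    refine ⟨⟨inferInstance, inferInstance, x, hxm, ?_, hreg⟩, hSd⟩
    refine IsSMulRegular.of_ne_zero ?_
    rintro rfl
    exact hxq q.zero_mem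

lemma Reg_of_regular {S : Type u} [CommRing S] [IsLocalRing S] (h : IsRegLocalRing S) :
    ∃ d, Reg d S := by
  obtain ⟨h1, s, h2, h3⟩ := h
  exact ⟨s.card, (Reg_of_regular_aux s.card S s h2 le_rfl h3.ge).1⟩

lemma Reg_PD {d : ℕ} {S : Type u} [CommRing S] (h : Reg d S) (M : Type u) [AddCommGroup M]
    [Module S M] [Module.Finite S M] : PD S d M := by
  induction d generalizing S M with
  | zero =>
    have h : IsField S := h
    let _ := h.toField
    rw [PD_zero_iff]
    exact Module.Projective.of_free
  | succ d ih =>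
    obtain ⟨hN, hL, x, hx, hxS, hq⟩ := h
    obtain ⟨n, π, hπ⟩ := Module.Finite.exists_fin' S M
    have hF : IsSMulRegular (Fin n → S) x := IsSMulRegular.pi fun _ => hxS
    have hK : IsSMulRegular (LinearMap.ker π) x := by
      intro a b h
      apply Subtype.ext
      exact hF (congrArg Subtype.val h)
    refine PD_right (IsSES.ker hπ) ?_ PD_of_projective
    rw [red_PD_iff hx hxS hK red_quot]
    have : Module.Finite (S ⧸ Ideal.span {x}) (QuotSMulTop x (LinearMap.ker π)) :=
      Module.Finite.of_restrictScalars_finite S _ _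
    exact ih hq _

lemma Reg_socle {d : ℕ} {S : Type u} [CommRing S] [IsLocalRing S] (h : Reg d S) (M : Type u)
    [AddCommGroup M]
    [Module S M] [Module.Finite S M] (j : ℕ) (hj : j < d) (hM : PD S j M) (y : M)
    (hy : ∀ t ∈ IsLocalRing.maximalIdeal S, t • y = 0) : y = 0 := by
  induction d generalizing S M j with
  | zero => omega
  | succ d ih =>
    obtain ⟨hN, hL, x, hx, hxS, hq⟩ := h
    obtain ⟨n, π, hπ⟩ := Module.Finite.exists_fin' S M
    have hF : IsSMulRegular (Fin n → S) x := IsSMulRegular.pi fun _ => hxS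
    cases j with
    | zero =>
      rw [PD_zero_iff] at hM
      obtain ⟨σ, hσ⟩ := Module.projective_lifting_property π LinearMap.id hπ
      have hσ' : ∀ z, π (σ z) = z := fun z => LinearMap.congr_fun hσ z
      have : σ y = 0 := by
        apply hF
        simp [← map_smul, hy x hx]
      rw [← hσ' y, this, map_zero]
    | succ i =>
      have hK : IsSMulRegular (LinearMap.ker π) x := by
        intro a b h
        apply Subtype.ext
        exact hF (congrArg Subtype.val h)
      have := quot_local hx
      have : Module.Finite (S ⧸ Ideal.span {x}) (QuotSMulTop x (LinearMap.ker π)) :=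
        Module.Finite.of_restrictScalars_finite S _ _
      have hred := red_quot (S := S) (x := x) (Y := LinearMap.ker π)
      have h1 := (red_PD_iff hx hxS hK hred i).1
        (PD_left (IsSES.ker hπ) PD_of_projective hM)
      obtain ⟨f, rfl⟩ := hπ y
      have hmf : ∀ t ∈ IsLocalRing.maximalIdeal S, t • f ∈ LinearMap.ker π := fun t ht => by
        simp [hy t ht]
      have h2 := ih hq _ i (by omega) h1 (Submodule.Quotient.mk ⟨x • f, hmf x hx⟩) (by
        intro t ht
        obtain ⟨t, rfl⟩ := Ideal.Quotient.mk_surjective t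
        have ht' : t ∈ IsLocalRing.maximalIdeal S := by
          have := IsLocalHom.of_surjective (Ideal.Quotient.mk (Ideal.span {x}))
            Ideal.Quotient.mk_surjective
          rwa [IsLocalRing.mem_maximalIdeal, mem_nonunits_iff, isUnit_map_iff] at ht
        change Submodule.mkQ _ (t • (⟨x • f, hmf x hx⟩ : LinearMap.ker π)) = 0
        rw [hred.2]
        exact ⟨⟨t • f, hmf t ht'⟩, Subtype.ext (smul_comm t x f)⟩)
      obtain ⟨k, hk⟩ := (hred.2 _).1 h2
      have h3 : f = k := hF (congrArg Subtype.val hk)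
      rw [h3]
      exact k.2

/-! ### Kernels of epimorphisms, syzygy-shifted categories -/

section Pull

variable {A : Type u} [CommRing A] {K P M N F U X : Type u} [AddCommGroup K] [Module A K]
  [AddCommGroup P] [Module A P] [AddCommGroup M] [Module A M] [AddCommGroup N] [Module A N]
  [AddCommGroup F] [Module A F] [AddCommGroup X] [Module A X] [AddCommGroup U] [Module A U]
  {𝒳 : Set (ModuleCat.{u} A)}

/-- The pullback of two maps. -/
def PB (g : P →ₗ[A] M) (h : F →ₗ[A] M) : Submodule A (P × F) where
  carrier := {z | g z.1 = h z.2}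
  zero_mem' := by simp
  add_mem' := by
    intro a b ha hb
    simp only [Set.mem_ofPred_eq] at ha hb
    simp [ha, hb]
  smul_mem' := by
    intro c a ha
    simp only [Set.mem_ofPred_eq] at ha
    simp [ha]

/-- Inclusion of the kernel of the second map. -/
def PBl (g : P →ₗ[A] M) (h : F →ₗ[A] M) : LinearMap.ker h →ₗ[A] PB g h :=
  (LinearMap.inr A P F ∘ₗ (LinearMap.ker h).subtype).codRestrict _ (by
    rintro ⟨k, hk⟩
    change g 0 = h k
    rw [map_zero]
    exact hk.symm)

/-- Inclusion of the kernel of the first map. -/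
def PBr (g : P →ₗ[A] M) (h : F →ₗ[A] M) : LinearMap.ker g →ₗ[A] PB g h :=
  (LinearMap.inl A P F ∘ₗ (LinearMap.ker g).subtype).codRestrict _ (by
    rintro ⟨k, hk⟩
    change g k = h 0
    rw [map_zero]
    exact hk)

lemma PB_fst (g : P →ₗ[A] M) (h : F →ₗ[A] M) (hh : Function.Surjective h) :
    IsSES (PBl g h) (LinearMap.fst A P F ∘ₗ (PB g h).subtype) := by
  refine ⟨?_, ?_, ?_⟩
  · rintro ⟨a, ha⟩ ⟨b, hb⟩ hab
    exact Subtype.ext (congrArg (fun z : PB g h => z.1.2) hab)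
  · intro p
    obtain ⟨v, hv⟩ := hh (g p)
    exact ⟨⟨(p, v), hv.symm⟩, rfl⟩
  · ext ⟨⟨p, v⟩, hz⟩
    constructor
    · rintro ⟨k, hk⟩
      exact (congrArg (fun z : PB g h => z.1.1) hk).symm
    · intro h0
      have h0 : p = 0 := h0
      subst h0
      have hz : g 0 = h v := hz
      exact ⟨⟨v, by rw [LinearMap.mem_ker, ← hz, map_zero]⟩, rfl⟩

lemma PB_snd (g : P →ₗ[A] M) (h : F →ₗ[A] M) (hg : Function.Surjective g) :
    IsSES (PBr g h) (LinearMap.snd A P F ∘ₗ (PB g h).subtype) := by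
  refine ⟨?_, ?_, ?_⟩
  · rintro ⟨a, ha⟩ ⟨b, hb⟩ hab
    exact Subtype.ext (congrArg (fun z : PB g h => z.1.1) hab)
  · intro p
    obtain ⟨v, hv⟩ := hg (h p)
    exact ⟨⟨(v, p), hv⟩, rfl⟩
  · ext ⟨⟨v, p⟩, hz⟩
    constructor
    · rintro ⟨k, hk⟩
      exact (congrArg (fun z : PB g h => z.1.2) hk).symm
    · intro h0
      have h0 : p = 0 := h0
      subst h0
      have hz : g v = h 0 := hz
      exact ⟨⟨v, by rw [LinearMap.mem_ker, hz, map_zero]⟩, rfl⟩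

/-- A short exact sequence with projective right end splits on the left. -/
lemma IsSES.retraction [Module.Projective A M] {f : K →ₗ[A] P} {g : P →ₗ[A] M} (h : IsSES f g) :
    ∃ r : P →ₗ[A] K, ∀ k, r (f k) = k := by
  obtain ⟨σ, hσ⟩ := Module.projective_lifting_property g LinearMap.id h.2.1
  have hσ' : ∀ m, g (σ m) = m := fun m => LinearMap.congr_fun hσ m
  let q : P →ₗ[A] LinearMap.range f := LinearMap.codRestrict _ (LinearMap.id - σ ∘ₗ g) (by
    intro p
    rw [h.2.2, LinearMap.mem_ker]
    simp [hσ'])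
  refine ⟨(LinearEquiv.ofInjective f h.1).symm.toLinearMap ∘ₗ q, fun k => ?_⟩
  have hk : g (f k) = 0 := by
    have : f k ∈ LinearMap.ker g := h.2.2 ▸ ⟨k, rfl⟩
    exact this
  change (LinearEquiv.ofInjective f h.1).symm (q (f k)) = k
  rw [LinearEquiv.symm_apply_eq]
  apply Subtype.ext
  change f k - σ (g (f k)) = f k
  rw [hk]
  simp

/-- The left end of a short exact sequence is the kernel. -/
noncomputable def IsSES.kerEquiv {f : K →ₗ[A] P} {g : P →ₗ[A] M} (h : IsSES f g) :
    LinearMap.ker g ≃ₗ[A] K :=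
  ((LinearEquiv.ofInjective f h.1).trans (LinearEquiv.ofEq _ _ h.2.2)).symm

/-- Resolving subcategories are closed under kernels of epimorphisms. -/
lemma IsResolving.epi [IsNoetherianRing A] (h : IsResolving A 𝒳) {f : K →ₗ[A] P} {g : P →ₗ[A] M}
    (hs : IsSES f g) (hP : IsIn 𝒳 P) (hM : IsIn 𝒳 M) : IsIn 𝒳 K := by
  have := h.finite hM
  obtain ⟨n, π, hπ⟩ := Module.Finite.exists_fin' A M
  have h1 : IsIn 𝒳 (LinearMap.ker π) := h.syz (IsSES.ker hπ) hM
  have h2 : IsIn 𝒳 (PB g π) := h.ext (PB_fst g π hπ) h1 hP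
  obtain ⟨r, hr⟩ := (PB_snd g π hs.2.1).retraction
  exact h.equiv hs.kerEquiv (h.retract _ r hr h2)

/-- Modules whose first syzygy lies in `𝒳`. -/
def Om (𝒳 : Set (ModuleCat.{u} A)) : Set (ModuleCat.{u} A) :=
  {L | Module.Finite A L ∧ ∃ (n : ℕ) (g : (Fin n → A) →ₗ[A] L), Function.Surjective g ∧
    IsIn 𝒳 (LinearMap.ker g)}

lemma Om_ker [IsNoetherianRing A] (h : IsResolving A 𝒳) (hM : IsIn (Om 𝒳) M) (u : U →ₗ[A] M)
    (hu : Function.Surjective u) (hU : IsIn 𝒳 U) : IsIn 𝒳 (LinearMap.ker u) := by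
  obtain ⟨hf, n, g, hg, hk⟩ := hM
  have h1 : IsIn 𝒳 (PB u g) := h.ext (PB_fst u g hg) hk hU
  exact h.epi (PB_snd u g hu) h1 h.proj

lemma Om_of [IsNoetherianRing A] (h : IsResolving A 𝒳) (u : U →ₗ[A] M)
    (hu : Function.Surjective u) (hU : IsIn 𝒳 U) (hk : IsIn 𝒳 (LinearMap.ker u)) :
    IsIn (Om 𝒳) M := by
  have := h.finite hU
  have hM : Module.Finite A M := Module.Finite.of_surjective u hu
  obtain ⟨n, π, hπ⟩ := Module.Finite.exists_fin' A M
  refine ⟨hM, n, π, hπ, ?_⟩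
  have h1 : IsIn 𝒳 (PB u π) := h.ext (PB_snd u π hu) hk h.proj
  exact h.epi (PB_fst u π hπ) h1 hU

lemma Om_sub [IsNoetherianRing A] (h : IsResolving A 𝒳) (hM : IsIn 𝒳 M) : IsIn (Om 𝒳) M := by
  refine Om_of h LinearMap.id Function.surjective_id hM ?_
  rw [LinearMap.ker_id]
  exact h.proj

lemma Om_resolving [IsNoetherianRing A] (h : IsResolving A 𝒳) : IsResolving A (Om 𝒳) where
  fg M hM := hM.1
  iso_closed := by
    rintro M N ⟨e⟩ ⟨hf, n, g, hg, hk⟩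
    refine Om_of (M := N) h (e.toLinearMap ∘ₗ g) (e.surjective.comp hg) h.proj ?_
    rw [LinearEquiv.ker_comp]
    exact hk
  proj_mem M hf hp := Om_sub (M := M) h h.proj
  summand_closed := by
    intro M N hMN
    have hfin : Module.Finite A (M × N) := hMN.1
    have : Module.Finite A M := Module.Finite.of_surjective _ (LinearMap.fst_surjective (R := A) (M := M) (M₂ := N))
    have : Module.Finite A N := Module.Finite.of_surjective _ (LinearMap.snd_surjective (R := A) (M := M) (M₂ := N))
    obtain ⟨a, α, hα⟩ := Module.Finite.exists_fin' A M
    obtain ⟨b, β, hβ⟩ := Module.Finite.exists_fin' A N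
    have h1 := Om_ker (M := M × N) h hMN (α.prodMap β) (hα.prodMap hβ) h.proj
    refine Om_of (M := M) h α hα h.proj ?_
    refine h.retract (N := LinearMap.ker (α.prodMap β))
      ((LinearMap.inl A _ _ ∘ₗ (LinearMap.ker α).subtype).codRestrict _ ?_)
      ((LinearMap.fst A _ _ ∘ₗ (LinearMap.ker (α.prodMap β)).subtype).codRestrict _ ?_) ?_ h1
    · rintro ⟨k, hk⟩
      rw [LinearMap.mem_ker] at hk ⊢
      simp [hk]
    · rintro ⟨k, hk⟩
      rw [LinearMap.mem_ker] at hk ⊢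
      exact congrArg Prod.fst hk
    · intro k
      rfl
  ext_closed := by
    intro K P M f g hs hK hM
    have hfK : Module.Finite A K := hK.1
    have hfM : Module.Finite A M := hM.1
    have : Module.Finite A (LinearMap.ker g) := Module.Finite.equiv hs.kerEquiv.symm
    have : Module.Finite A (P ⧸ LinearMap.ker g) :=
      Module.Finite.equiv (g.quotKerEquivOfSurjective hs.2.1).symm
    have hfP : Module.Finite A P := Module.Finite.of_submodule_quotient (LinearMap.ker g)
    obtain ⟨n, π, hπ⟩ := Module.Finite.exists_fin' A P
    have h1 := Om_ker (M := M) h hM (g ∘ₗ π) (hs.2.1.comp hπ) h.proj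
    let u : LinearMap.ker (g ∘ₗ π) →ₗ[A] LinearMap.ker g :=
      (π ∘ₗ (LinearMap.ker (g ∘ₗ π)).subtype).codRestrict _ (fun z => z.2)
    have hu : Function.Surjective (hs.kerEquiv.toLinearMap ∘ₗ u) := by
      refine hs.kerEquiv.surjective.comp ?_
      rintro ⟨p, hp⟩
      obtain ⟨v, rfl⟩ := hπ p
      exact ⟨⟨v, hp⟩, rfl⟩
    have h2 := Om_ker (M := K) h hK _ hu h1
    rw [LinearEquiv.ker_comp] at h2
    refine Om_of (M := P) h π hπ h.proj (h.retract (N := LinearMap.ker u)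
      (LinearMap.codRestrict _ (LinearMap.codRestrict _ (LinearMap.ker π).subtype ?_) ?_)
      ((LinearMap.codRestrict _ ((LinearMap.ker (g ∘ₗ π)).subtype ∘ₗ (LinearMap.ker u).subtype)
        ?_)) ?_ h2)
    · rintro ⟨k, hk⟩
      rw [LinearMap.mem_ker] at hk ⊢
      simp [hk]
    · rintro ⟨k, hk⟩
      exact Subtype.ext hk
    · rintro ⟨⟨k, hk⟩, hk'⟩
      exact congrArg Subtype.val hk'
    · intro k
      rfl
  syzygy_closed := by
    intro K P M f g hs hfK hfP hpP hM
    have h1 := Om_ker (M := M) h hM g hs.2.1 h.proj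
    exact Om_sub (M := K) h (h.equiv hs.kerEquiv h1)

end Pull

section RedCat

variable {S : Type u} [CommRing S] {I : Ideal S}

/-- The modules over a quotient ring that lie in a given subcategory. -/
def RedCat (I : Ideal S) (𝒳 : Set (ModuleCat.{u} S)) : Set (ModuleCat.{u} (S ⧸ I)) :=
  {L | (ModuleCat.restrictScalars (Ideal.Quotient.mk I)).obj L ∈ 𝒳}

lemma RedCat_iff {𝒳 : Set (ModuleCat.{u} S)} (h : IsResolving S 𝒳) {L : Type u} [AddCommGroup L]
    [Module S L] [Module (S ⧸ I) L] [IsScalarTower S (S ⧸ I) L] :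
    IsIn (RedCat I 𝒳) L ↔ IsIn 𝒳 L := by
  let X := (ModuleCat.restrictScalars (Ideal.Quotient.mk I)).obj (ModuleCat.of (S ⧸ I) L)
  let e : L ≃ₗ[S] X :=
    { AddEquiv.refl L with
      map_smul' := fun s l => by
        change s • l = (Ideal.Quotient.mk I s) • l
        rw [← algebraMap_smul (S ⧸ I) s l]
        rfl }
  exact ⟨fun hX => h.equiv (M := X) e.symm hX, fun hX => h.equiv (N := X) e hX⟩

lemma RedCat_resolving [IsNoetherianRing S] {𝒳 : Set (ModuleCat.{u} S)} (h : IsResolving S 𝒳)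
    (hQ : IsIn 𝒳 (S ⧸ I)) : IsResolving (S ⧸ I) (RedCat I 𝒳) where
  fg L hL := by
    let _ : Module S L := Module.compHom L (Ideal.Quotient.mk I)
    have : IsScalarTower S (S ⧸ I) L := ⟨fun a b c => by
      change _ = (Ideal.Quotient.mk I a) • (b • c)
      rw [smul_smul]; rfl⟩
    have hf : Module.Finite S L := h.fg _ hL
    exact Module.Finite.of_restrictScalars_finite S (S ⧸ I) L
  iso_closed := by
    rintro M N ⟨e⟩ hM
    exact h.iso_closed _ _ ⟨((ModuleCat.restrictScalars (Ideal.Quotient.mk I)).mapIso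
      e.toModuleIso).toLinearEquiv⟩ hM
  proj_mem := by
    intro M hf hp
    obtain ⟨n, π, hπ⟩ := Module.Finite.exists_fin' (S ⧸ I) M
    obtain ⟨σ, hσ⟩ := Module.projective_lifting_property π LinearMap.id hπ
    have h1 : ∀ n : ℕ, IsIn 𝒳 (Fin n → S ⧸ I) := by
      intro n
      induction n with
      | zero => exact h.proj
      | succ n ih =>
        exact h.equiv (Fin.consLinearEquiv S (fun _ : Fin (n+1) => S ⧸ I)) (h.prod hQ ih)
    let _ : Module S M := Module.compHom M (Ideal.Quotient.mk I)
    have : IsScalarTower S (S ⧸ I) M := ⟨fun a b c => by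
      change _ = (Ideal.Quotient.mk I a) • (b • c)
      rw [smul_smul]; rfl⟩
    refine (RedCat_iff (L := M) h).2 (h.retract (σ.restrictScalars S) (π.restrictScalars S)
      (fun x => LinearMap.congr_fun hσ x) (h1 n))
  summand_closed M N hMN := by
    let _ : Module S M := Module.compHom M (Ideal.Quotient.mk I)
    have : IsScalarTower S (S ⧸ I) M := ⟨fun a b c => by
      change _ = (Ideal.Quotient.mk I a) • (b • c)
      rw [smul_smul]; rfl⟩
    let _ : Module S N := Module.compHom N (Ideal.Quotient.mk I)
    have : IsScalarTower S (S ⧸ I) N := ⟨fun a b c => by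
      change _ = (Ideal.Quotient.mk I a) • (b • c)
      rw [smul_smul]; rfl⟩
    exact (RedCat_iff (L := M) h).2 (h.fst ((RedCat_iff (L := M × N) h).1 hMN))
  ext_closed M N K f g hs hM hK := by
    refine h.ext_closed _ _ _ ((ModuleCat.restrictScalars (Ideal.Quotient.mk I)).map
      (ModuleCat.ofHom f)).hom ((ModuleCat.restrictScalars (Ideal.Quotient.mk I)).map
      (ModuleCat.ofHom g)).hom ⟨hs.1, hs.2.1, ?_⟩ hM hK
    ext x
    exact SetLike.ext_iff.1 hs.2.2 x
  syzygy_closed K P M f g hs hK hP hpP hM := by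
    let _ : Module S P := Module.compHom P (Ideal.Quotient.mk I)
    have : IsScalarTower S (S ⧸ I) P := ⟨fun a b c => by
      change _ = (Ideal.Quotient.mk I a) • (b • c)
      rw [smul_smul]; rfl⟩
    let _ : Module S M := Module.compHom M (Ideal.Quotient.mk I)
    have : IsScalarTower S (S ⧸ I) M := ⟨fun a b c => by
      change _ = (Ideal.Quotient.mk I a) • (b • c)
      rw [smul_smul]; rfl⟩
    let _ : Module S K := Module.compHom K (Ideal.Quotient.mk I)
    have : IsScalarTower S (S ⧸ I) K := ⟨fun a b c => by
      change _ = (Ideal.Quotient.mk I a) • (b • c)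
      rw [smul_smul]; rfl⟩
    have h1 : ∀ n : ℕ, IsIn 𝒳 (Fin n → S ⧸ I) := by
      intro n
      induction n with
      | zero => exact h.proj
      | succ n ih =>
        exact h.equiv (Fin.consLinearEquiv S (fun _ : Fin (n+1) => S ⧸ I)) (h.prod hQ ih)
    obtain ⟨n, π, hπ⟩ := Module.Finite.exists_fin' (S ⧸ I) P
    obtain ⟨σ, hσ⟩ := Module.projective_lifting_property π LinearMap.id hπ
    have hP' : IsIn 𝒳 P := h.retract (σ.restrictScalars S) (π.restrictScalars S)
      (fun x => LinearMap.congr_fun hσ x) (h1 n)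
    refine (RedCat_iff (L := K) h).2 (h.epi (f := f.restrictScalars S) (g := g.restrictScalars S)
      ⟨hs.1, hs.2.1, ?_⟩ hP' ((RedCat_iff (L := M) h).1 hM))
    ext x
    exact SetLike.ext_iff.1 hs.2.2 x

end RedCat

/-! ### The local theorem -/

section Loc

variable {S : Type u} [CommRing S] {x : S} {Y T N : Type u}
  [AddCommGroup Y] [Module S Y] [AddCommGroup T] [Module S T] [AddCommGroup N] [Module S N]
  {𝒴 : Set (ModuleCat.{u} S)}

lemma Om_quot [IsNoetherianRing S] (h : IsResolving S 𝒴) (hxS : IsSMulRegular S x) :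
    IsIn (Om 𝒴) (S ⧸ Ideal.span {x}) := by
  refine Om_of h (Submodule.mkQ (Ideal.span {x})) (Submodule.mkQ_surjective _) h.proj ?_
  rw [Submodule.ker_mkQ]
  have hinj : Function.Injective (LinearMap.toSpanSingleton S S x) := by
    intro a b hab
    apply hxS
    simpa [mul_comm] using hab
  refine h.equiv ((LinearEquiv.ofInjective _ hinj).trans (LinearEquiv.ofEq _ _ ?_)) h.proj
    (M := S)
  exact LinearMap.range_toSpanSingleton x

/-- For regular `x`, `E π x` is the syzygy of `Y / x Y`. -/
lemma E_ker (hY : IsSMulRegular Y x) {n : ℕ} (π : (Fin n → S) →ₗ[S] Y) {q : Y →ₗ[S] T}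
    (hred : IsRed x q) : Nonempty (E π x ≃ₗ[S] LinearMap.ker (q ∘ₗ π)) := by
  let u : E π x →ₗ[S] (Fin n → S) := LinearMap.snd S _ _ ∘ₗ (E π x).subtype
  have hu : Function.Injective u := by
    refine (injective_iff_map_eq_zero _).2 ?_
    rintro ⟨⟨y, v⟩, hz⟩ h0
    have h0 : v = 0 := h0
    subst h0
    rw [mem_E] at hz
    simp only [map_zero, add_zero] at hz
    have : y = 0 := hY (by simpa using hz)
    subst this
    rfl
  refine ⟨(LinearEquiv.ofInjective u hu).trans (LinearEquiv.ofEq _ _ ?_)⟩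
  ext v
  constructor
  · rintro ⟨⟨⟨y, v'⟩, hz⟩, rfl⟩
    rw [mem_E] at hz
    rw [LinearMap.mem_ker, LinearMap.comp_apply, hred.2]
    refine ⟨-y, ?_⟩
    rw [smul_neg]
    exact (neg_eq_of_add_eq_zero_right hz).symm
  · intro hv
    rw [LinearMap.mem_ker, LinearMap.comp_apply, hred.2] at hv
    obtain ⟨y, hy⟩ := hv
    refine ⟨⟨(-y, v), ?_⟩, rfl⟩
    rw [mem_E]
    simp [hy]

lemma Om_E [IsNoetherianRing S] (h : IsResolving S 𝒴) (hY : IsSMulRegular Y x) {n : ℕ}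
    (π : (Fin n → S) →ₗ[S] Y) (hπ : Function.Surjective π) :
    IsIn (Om 𝒴) (QuotSMulTop x Y) ↔ IsIn 𝒴 (E π x) := by
  have hred := red_quot (S := S) (x := x) (Y := Y)
  obtain ⟨e⟩ := E_ker hY π hred
  constructor
  · intro h1
    exact h.equiv e.symm (Om_ker h h1 _ (hred.1.comp hπ) h.proj)
  · intro h1
    exact Om_of (U := Fin n → S) h (Submodule.mkQ _ ∘ₗ π) (hred.1.comp hπ) h.proj (h.equiv e h1)

lemma J_red {t : S} (ht : t ∈ J S Y) :
    Ideal.Quotient.mk (Ideal.span {x}) t ∈ J (S ⧸ Ideal.span {x}) (QuotSMulTop x Y) := by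
  obtain ⟨n, s, f, hf⟩ := ht
  have hred := red_quot (S := S) (x := x) (Y := Y)
  obtain ⟨s', hs'⟩ := red_map hred (red_pi n) s
  obtain ⟨f', hf'⟩ := red_map (red_pi n) hred f
  refine ⟨n, s', f', fun l => ?_⟩
  obtain ⟨y, rfl⟩ := hred.1 l
  rw [hs', hf', hf, map_smul]
  rfl

lemma radJ_red [IsLocalRing S] [IsLocalRing (S ⧸ Ideal.span {x})]
    (h : IsLocalRing.maximalIdeal S ≤ (J S Y).radical) :
    IsLocalRing.maximalIdeal (S ⧸ Ideal.span {x}) ≤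
      (J (S ⧸ Ideal.span {x}) (QuotSMulTop x Y)).radical := by
  intro t ht
  obtain ⟨t, rfl⟩ := Ideal.Quotient.mk_surjective t
  have ht' : t ∈ IsLocalRing.maximalIdeal S := by
    have := IsLocalHom.of_surjective (Ideal.Quotient.mk (Ideal.span {x}))
      Ideal.Quotient.mk_surjective
    rwa [IsLocalRing.mem_maximalIdeal, mem_nonunits_iff, isUnit_map_iff] at ht
  obtain ⟨a, ha⟩ := h ht'
  exact ⟨a, by rw [← map_pow]; exact J_red ha⟩

/-- The submodule of elements killed by a power of `x`. -/
def Tx (x : S) (Y : Type u) [AddCommGroup Y] [Module S Y] : Submodule S Y where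
  carrier := {y | ∃ a : ℕ, x ^ a • y = 0}
  zero_mem' := ⟨0, by simp⟩
  add_mem' := by
    rintro y z ⟨a, ha⟩ ⟨b, hb⟩
    refine ⟨a + b, ?_⟩
    have h1 : x ^ (a + b) • y = 0 := by rw [add_comm, pow_add, mul_smul, ha, smul_zero]
    have h2 : x ^ (a + b) • z = 0 := by rw [pow_add, mul_smul, hb, smul_zero]
    rw [smul_add, h1, h2, add_zero]
  smul_mem' := by
    rintro c y ⟨a, ha⟩
    exact ⟨a, by rw [smul_comm, ha, smul_zero]⟩

lemma Tx_free (hxS : IsSMulRegular S x) {n : ℕ} (v : Fin n → S) (hv : v ∈ Tx x (Fin n → S)) :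
    v = 0 := by
  obtain ⟨a, ha⟩ := hv
  have hF : IsSMulRegular (Fin n → S) (x ^ a) := (IsSMulRegular.pi fun _ => hxS).pow a
  exact hF (by simpa using ha)

lemma Tx_map (f : Y →ₗ[S] N) {y : Y} (hy : y ∈ Tx x Y) : f y ∈ Tx x N := by
  obtain ⟨a, ha⟩ := hy
  exact ⟨a, by rw [← map_smul, ha, map_zero]⟩

lemma J_Tx (hxS : IsSMulRegular S x) {t : S} (ht : t ∈ J S Y) {y : Y} (hy : y ∈ Tx x Y) :
    t • y = 0 := by
  obtain ⟨n, s, f, hf⟩ := ht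
  rw [← hf, Tx_free hxS _ (Tx_map s hy), map_zero]

lemma J_modTx (hxS : IsSMulRegular S x) : J S Y ≤ J S (Y ⧸ Tx x Y) := by
  rintro t ⟨n, s, f, hf⟩
  refine ⟨n, (Tx x Y).liftQ s (fun y hy => Tx_free hxS _ (Tx_map s hy)),
    (Tx x Y).mkQ ∘ₗ f, fun m => ?_⟩
  obtain ⟨y, rfl⟩ := Submodule.mkQ_surjective _ m
  rw [← map_smul, ← hf]
  rfl

lemma modTx_reg : IsSMulRegular (Y ⧸ Tx x Y) x := by
  rw [isSMulRegular_iff_right_eq_zero_of_smul]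
  intro m hm
  obtain ⟨y, rfl⟩ := Submodule.mkQ_surjective _ m
  rw [← map_smul, Submodule.mkQ_apply, Submodule.Quotient.mk_eq_zero] at hm
  obtain ⟨a, ha⟩ := hm
  rw [Submodule.mkQ_apply, Submodule.Quotient.mk_eq_zero]
  exact ⟨a + 1, by rw [pow_succ, mul_smul, ha]⟩

lemma reg_of_Tx (h : Tx x Y = ⊥) : IsSMulRegular Y x := by
  rw [isSMulRegular_iff_right_eq_zero_of_smul]
  intro y hy
  have : y ∈ Tx x Y := ⟨1, by simpa using hy⟩
  simpa [h] using this

/-- Being killed by powers of the maximal ideal. -/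
def MT (S : Type u) [CommRing S] [IsLocalRing S] (T : Type u) [AddCommGroup T] [Module S T] :
    Prop := ∀ t ∈ IsLocalRing.maximalIdeal S, ∃ a : ℕ, ∀ y : T, t ^ a • y = 0

lemma MT.J [IsLocalRing S] (h : MT S T) : IsLocalRing.maximalIdeal S ≤ (J S T).radical := by
  intro t ht
  obtain ⟨a, ha⟩ := h t ht
  exact ⟨a, 0, 0, 0, fun m => by simp [ha]⟩

lemma MT_Tx [IsLocalRing S] (hxS : IsSMulRegular S x)
    (h : IsLocalRing.maximalIdeal S ≤ (J S Y).radical) : MT S (Tx x Y) := by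
  intro t ht
  obtain ⟨a, ha⟩ := h ht
  exact ⟨a, fun y => Subtype.ext (J_Tx hxS ha y.2)⟩

lemma socle_zero [IsLocalRing S] [IsNoetherianRing S]
    (hs : ∀ y : T, (∀ t ∈ IsLocalRing.maximalIdeal S, t • y = 0) → y = 0) (hT : MT S T) (y : T) :
    y = 0 := by
  have h1 : IsLocalRing.maximalIdeal S ≤ (Module.annihilator S T).radical := by
    intro t ht
    obtain ⟨a, ha⟩ := hT t ht
    exact ⟨a, Module.mem_annihilator.2 ha⟩
  obtain ⟨b, hb⟩ := Ideal.exists_pow_le_of_le_radical_of_fg h1 (IsNoetherian.noetherian _)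
  have key : ∀ (b : ℕ) (y : T), (∀ t ∈ IsLocalRing.maximalIdeal S ^ b, t • y = 0) → y = 0 := by
    intro b
    induction b with
    | zero => intro y hy; simpa using hy 1 (by simp)
    | succ b ih =>
      intro y hy
      refine ih y fun t ht => hs _ fun s hs => ?_
      rw [smul_smul]
      refine hy _ ?_
      rw [pow_succ']
      exact Ideal.mul_mem_mul hs ht
  exact key b y fun t ht => Module.mem_annihilator.1 (hb ht) y

lemma Tx_bot [IsLocalRing S] [IsNoetherianRing S] {d : ℕ} (hR : Reg d S)
    (hxS : IsSMulRegular S x) [Module.Finite S Y]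
    (h : IsLocalRing.maximalIdeal S ≤ (J S Y).radical) {j : ℕ} (hj : j < d) (hY : PD S j Y) :
    Tx x Y = ⊥ := by
  refine (Submodule.eq_bot_iff _).2 fun y hy => ?_
  refine congrArg Subtype.val (socle_zero (T := Tx x Y) ?_ (MT_Tx hxS h) ⟨y, hy⟩)
  intro z hz
  refine Subtype.ext (Reg_socle hR Y j hj hY z.1 fun t ht => congrArg Subtype.val (hz t ht))

/-- The statement of the local theorem. -/
def LocThm (S : Type u) [CommRing S] [IsLocalRing S] : Prop :=
  ∀ (𝒴 : Set (ModuleCat.{u} S)), IsResolving S 𝒴 → ∀ (Y N : Type u) [AddCommGroup Y] [Module S Y]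
    [AddCommGroup N] [Module S N] [Module.Finite S N], IsIn 𝒴 Y →
    IsLocalRing.maximalIdeal S ≤ (J S Y).radical →
    IsLocalRing.maximalIdeal S ≤ (J S N).radical → (∀ j, PD S j Y → PD S j N) → IsIn 𝒴 N

lemma loc_case1 [IsLocalRing S] [IsNoetherianRing S] {d : ℕ} (hR : Reg (d+1) S)
    (hx : x ∈ IsLocalRing.maximalIdeal S) (hxS : IsSMulRegular S x)
    [IsLocalRing (S ⧸ Ideal.span {x})] (hL : LocThm (S ⧸ Ideal.span {x}))
    (h𝒴 : IsResolving S 𝒴) [Module.Finite S N] (hY : IsIn 𝒴 Y)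
    (hJY : IsLocalRing.maximalIdeal S ≤ (J S Y).radical)
    (hJN : IsLocalRing.maximalIdeal S ≤ (J S N).radical) (hYN : ∀ j, PD S j Y → PD S j N)
    (hd : PD S d Y) : IsIn 𝒴 N := by
  have := h𝒴.finite hY
  have hrY := reg_of_Tx (Tx_bot hR hxS hJY (Nat.lt_succ_self d) hd)
  have hrN := reg_of_Tx (Tx_bot hR hxS hJN (Nat.lt_succ_self d) (hYN d hd))
  have hO := Om_resolving h𝒴
  have hRed := RedCat_resolving hO (Om_quot h𝒴 hxS)
  obtain ⟨a, α, hα⟩ := Module.Finite.exists_fin' S Y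
  obtain ⟨b, β, hβ⟩ := Module.Finite.exists_fin' S N
  have hY' : IsIn (RedCat (Ideal.span {x}) (Om 𝒴)) (QuotSMulTop x Y) :=
    (RedCat_iff hO).2 ((Om_E h𝒴 hrY α hα).2 (E_mem h𝒴 α hα x hY))
  have : Module.Finite (S ⧸ Ideal.span {x}) (QuotSMulTop x N) :=
    Module.Finite.of_restrictScalars_finite S _ _
  have hN' := hL _ hRed (QuotSMulTop x Y) (QuotSMulTop x N) hY' (radJ_red hJY) (radJ_red hJN)
    (fun j hj => (red_PD_iff hx hxS hrN red_quot j).1 (hYN j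
      ((red_PD_iff hx hxS hrY red_quot j).2 hj)))
  have h1 := (Om_E h𝒴 hrN β hβ).1 ((RedCat_iff hO).1 hN')
  exact E_descend_rad h𝒴 β hβ x (hJN hx) h1

/-- In the second case, torsion-free objects are in the subcategory. -/
lemma loc_case2a [IsLocalRing S] [IsNoetherianRing S] {d : ℕ} (hR : Reg (d+1) S)
    (hx : x ∈ IsLocalRing.maximalIdeal S) (hxS : IsSMulRegular S x)
    [IsLocalRing (S ⧸ Ideal.span {x})] (hL : LocThm (S ⧸ Ideal.span {x}))
    (h𝒴 : IsResolving S 𝒴) [Module.Finite S N] (hY : IsIn 𝒴 Y)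
    (hJY : IsLocalRing.maximalIdeal S ≤ (J S Y).radical)
    (hJN : IsLocalRing.maximalIdeal S ≤ (J S N).radical)
    (hd : ¬ PD S d Y) (hN : PD S d N) : IsIn 𝒴 N := by
  have := h𝒴.finite hY
  obtain ⟨a, α, hα⟩ := Module.Finite.exists_fin' S Y
  have hK : IsIn 𝒴 (LinearMap.ker α) := h𝒴.syz (IsSES.ker hα) hY
  have hdK : PD S d (LinearMap.ker α) := PD_left (IsSES.ker hα) PD_of_projective (Reg_PD hR Y)
  refine loc_case1 hR hx hxS hL h𝒴 hK (hJY.trans (Ideal.radical_mono (J_syz (IsSES.ker hα))))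
    hJN (fun j hj => ?_) hdK
  by_cases hjd : d ≤ j
  · exact PD_mono hjd hN
  · exact absurd (PD_mono (by omega) (PD_right (IsSES.ker hα) hj PD_of_projective)) hd

lemma PD_of_reg [IsLocalRing S] [IsNoetherianRing S] {d : ℕ}
    (hx : x ∈ IsLocalRing.maximalIdeal S) (hxS : IsSMulRegular S x)
    (hR : Reg d (S ⧸ Ideal.span {x})) [Module.Finite S Y] (hY : IsSMulRegular Y x) :
    PD S d Y := by
  have : Module.Finite (S ⧸ Ideal.span {x}) (QuotSMulTop x Y) :=
    Module.Finite.of_restrictScalars_finite S _ _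
  exact (red_PD_iff hx hxS hY red_quot d).2 (Reg_PD hR _)

/-- From a nonzero torsion module in a resolving subcategory satisfying the torsion-splitting
property, get all torsion modules. -/
lemma all_MT [IsLocalRing S] [IsNoetherianRing S]
    (h𝒴 : IsResolving S 𝒴) (hx : x ∈ IsLocalRing.maximalIdeal S) (hxS : IsSMulRegular S x)
    (hT : ∀ (Y : Type u) [AddCommGroup Y] [Module S Y], IsIn 𝒴 Y →
      IsLocalRing.maximalIdeal S ≤ (J S Y).radical → IsIn 𝒴 (Tx x Y))
    (T₀ : Type u) [AddCommGroup T₀] [Module S T₀] [Nontrivial T₀] (h0 : MT S T₀)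
    (h0𝒴 : IsIn 𝒴 T₀) [Module.Finite S N] (hN : MT S N) : IsIn 𝒴 N := by
  -- step: kernels of multiplication
  have step : ∀ (T : Type u) [AddCommGroup T] [Module S T], IsIn 𝒴 T → MT S T →
      ∀ t ∈ IsLocalRing.maximalIdeal S, IsIn 𝒴 (LinearMap.ker (LinearMap.lsmul S T t)) := by
    intro T _ _ hT𝒴 hTm t ht
    have := h𝒴.finite hT𝒴
    obtain ⟨a, α, hα⟩ := Module.Finite.exists_fin' S T
    have h1 : IsIn 𝒴 (E α t) := E_mem h𝒴 α hα t hT𝒴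
    have h2 := hT (E α t) h1 (hTm.J.trans (le_sup_left.trans (radJ_E α hα t)))
    obtain ⟨b, hb⟩ := hTm x hx
    refine h𝒴.retract
      (LinearMap.codRestrict _ (LinearMap.codRestrict _
        (LinearMap.inl S T _ ∘ₗ (LinearMap.ker (LinearMap.lsmul S T t)).subtype) ?_) ?_)
      (LinearMap.codRestrict _ (LinearMap.fst S T _ ∘ₗ (E α t).subtype ∘ₗ
        (Tx x (E α t)).subtype) ?_) ?_ h2
    · rintro ⟨y, hy⟩
      rw [mem_E]
      have hy : t • y = 0 := hy
      simp [hy]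
    · rintro ⟨y, hy⟩
      refine ⟨b, Subtype.ext ?_⟩
      refine Prod.ext (hb y) ?_
      exact smul_zero _
    · rintro ⟨⟨⟨y, v⟩, hz⟩, hz'⟩
      have hv : v = 0 := Tx_free hxS v (Tx_map (LinearMap.snd S T _ ∘ₗ (E α t).subtype) hz')
      subst hv
      rw [mem_E] at hz
      simpa using hz
    · intro k
      rfl
  -- choose a maximal annihilator
  obtain ⟨I, ⟨T, i1, i2, i3, hTm, hT𝒴, rfl⟩, hImax⟩ := set_has_maximal_iff_noetherian.2
    (inferInstance : IsNoetherian S S)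
    {I : Ideal S | ∃ (T : Type u) (_ : AddCommGroup T) (_ : Module S T), Nontrivial T ∧ MT S T ∧
      IsIn 𝒴 T ∧ Module.annihilator S T = I}
    ⟨_, T₀, inferInstance, inferInstance, inferInstance, h0, h0𝒴, rfl⟩
  have hkill : ∀ t ∈ IsLocalRing.maximalIdeal S, ∀ y : T, t • y = 0 := by
    intro t ht
    by_contra hcon
    refine hImax (Module.annihilator S (LinearMap.ker (LinearMap.lsmul S T t)))
      ⟨_, _, _, ?_, ?_, step T hT𝒴 hTm t ht, rfl⟩ ?_
    · -- nontrivial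
      by_contra hnt
      rw [not_nontrivial_iff_subsingleton] at hnt
      have hinj : ∀ y : T, t • y = 0 → y = 0 := fun y hy =>
        congrArg Subtype.val (Subsingleton.elim (⟨y, hy⟩ : LinearMap.ker (LinearMap.lsmul S T t)) 0)
      obtain ⟨a, ha⟩ := hTm t ht
      have hreg : IsSMulRegular T t := isSMulRegular_iff_right_eq_zero_of_smul.2 hinj
      obtain ⟨y, hy⟩ := exists_ne (0 : T)
      exact hy ((hreg.pow a) (by simpa using ha y))
    · intro s hs
      obtain ⟨a, ha⟩ := hTm s hs
      exact ⟨a, fun y => Subtype.ext (ha y.1)⟩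
    · refine lt_of_le_of_ne ?_ ?_
      · intro s hs
        rw [Module.mem_annihilator] at hs ⊢
        exact fun y => Subtype.ext (hs y.1)
      · intro heq
        apply hcon
        rw [← Module.mem_annihilator, heq, Module.mem_annihilator]
        exact fun y => Subtype.ext y.2
  have hk : IsIn 𝒴 (S ⧸ IsLocalRing.maximalIdeal S) := by
    have htor : Module.IsTorsionBySet S T (IsLocalRing.maximalIdeal S : Set S) := by
      rintro y ⟨t, ht⟩
      exact hkill t ht y
    let _ : Module (S ⧸ IsLocalRing.maximalIdeal S) T := htor.module
    have : IsScalarTower S (S ⧸ IsLocalRing.maximalIdeal S) T := htor.isScalarTower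
    let _ : Field (S ⧸ IsLocalRing.maximalIdeal S) := Ideal.Quotient.field _
    obtain ⟨y, hy⟩ := exists_ne (0 : T)
    obtain ⟨r, hr⟩ := LinearMap.exists_leftInverse_of_injective
      (LinearMap.toSpanSingleton (S ⧸ IsLocalRing.maximalIdeal S) T y)
      (LinearMap.ker_toSpanSingleton _ hy)
    exact h𝒴.retract ((LinearMap.toSpanSingleton (S ⧸ IsLocalRing.maximalIdeal S) T
      y).restrictScalars S) (r.restrictScalars S) (fun z => LinearMap.congr_fun hr z) hT𝒴
  revert hN
  induction ‹Module.Finite S N› using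
    IsNoetherianRing.induction_on_isQuotientEquivQuotientPrime S with
  | subsingleton N => exact fun _ => h𝒴.proj
  | quotient N p f =>
    intro hN
    have hle : IsLocalRing.maximalIdeal S ≤ p.1 := by
      intro t ht
      obtain ⟨a, ha⟩ := hN t ht
      have h1 := ha (f.symm 1)
      rw [← map_smul, LinearEquiv.map_eq_zero_iff, Algebra.smul_def, mul_one] at h1
      exact p.2.mem_of_pow_mem a (Ideal.Quotient.eq_zero_iff_mem.1 h1)
    have heq : IsLocalRing.maximalIdeal S = p.1 :=
      le_antisymm hle (IsLocalRing.le_maximalIdeal p.2.ne_top)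
    rw [heq] at hk
    exact h𝒴.equiv f.symm hk
  | exact N₁ N₂ N₃ f g hf hg hfg h₁ h₃ =>
    intro hN
    refine h𝒴.ext ⟨hf, hg, (LinearMap.exact_iff.1 hfg).symm⟩ (h₁ ?_) (h₃ ?_)
    · intro t ht
      obtain ⟨a, ha⟩ := hN t ht
      exact ⟨a, fun y => hf (by simp [ha])⟩
    · intro t ht
      obtain ⟨a, ha⟩ := hN t ht
      refine ⟨a, fun y => ?_⟩
      obtain ⟨z, rfl⟩ := hg y
      rw [← map_smul, ha, map_zero]

theorem local_thm {d : ℕ} (hR : Reg d S) [IsLocalRing S] : LocThm S := by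
  induction d generalizing S with
  | zero =>
    intro 𝒴 h𝒴 Y N _ _ _ _ _ _ _ _ _
    have : Module.Projective S N := PD_zero_iff.1 (Reg_PD hR N)
    exact h𝒴.proj
  | succ d ih =>
    have hR' := hR
    obtain ⟨hN, hloc, x, hx, hxS, hq⟩ := hR
    have := quot_local hx
    have hL := ih hq
    intro 𝒴 h𝒴 Y N _ _ _ _ _ hY hJY hJN hYN
    by_cases hd : PD S d Y
    · exact loc_case1 hR' hx hxS hL h𝒴 hY hJY hJN hYN hd
    · have ha : ∀ (N : Type u) [AddCommGroup N] [Module S N] [Module.Finite S N],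
          IsLocalRing.maximalIdeal S ≤ (J S N).radical → IsIn 𝒴 (N ⧸ Tx x N) := by
        intro N _ _ _ hJ
        refine loc_case2a hR' hx hxS hL h𝒴 hY hJY
          (hJ.trans (Ideal.radical_mono (J_modTx hxS))) hd (PD_of_reg hx hxS hq modTx_reg)
      have hses : ∀ (N : Type u) [AddCommGroup N] [Module S N],
          IsSES (Tx x N).subtype (Tx x N).mkQ := fun N _ _ =>
        ⟨Subtype.val_injective, Submodule.mkQ_surjective _, by simp⟩
      have hb : ∀ (Y : Type u) [AddCommGroup Y] [Module S Y], IsIn 𝒴 Y →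
          IsLocalRing.maximalIdeal S ≤ (J S Y).radical → IsIn 𝒴 (Tx x Y) := by
        intro Y _ _ hY hJ
        have := h𝒴.finite hY
        exact h𝒴.epi (hses Y) hY (ha Y hJ)
      have hfY := h𝒴.finite hY
      have hnt : Nontrivial (Tx x Y) := by
        rw [Submodule.nontrivial_iff_ne_bot]
        intro h0
        exact hd (PD_of_reg hx hxS hq (reg_of_Tx h0))
      refine h𝒴.ext (hses N) (all_MT h𝒴 hx hxS hb (Tx x Y) (MT_Tx hxS hJY) (hb Y hY hJY)
        (MT_Tx hxS hJN)) (ha N hJN)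

end Loc

/-! ### Localization of a resolving subcategory -/

section LocCat

variable {A : Type u} [CommRing A] (S : Submonoid A) {K X Z F : Type u}
  [AddCommGroup K] [Module A K] [AddCommGroup X] [Module A X] [AddCommGroup Z] [Module A Z]
  [AddCommGroup F] [Module A F]
  {M N L P : Type u} [AddCommGroup M] [Module (Localization S) M]
  [AddCommGroup N] [Module (Localization S) N] [AddCommGroup L] [Module (Localization S) L]
  [AddCommGroup P] [Module (Localization S) P]

/-- Direct summands of localizations of objects of `𝒳`. -/
def LC (𝒳 : Set (ModuleCat.{u} A)) : Set (ModuleCat.{u} (Localization S)) :=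
  {N | ∃ (X : Type u) (_ : AddCommGroup X) (_ : Module A X), IsIn 𝒳 X ∧
    ∃ (i : N →ₗ[Localization S] LocalizedModule S X)
      (r : LocalizedModule S X →ₗ[Localization S] N), ∀ z, r (i z) = z}

variable {𝒳 : Set (ModuleCat.{u} A)} {S}

lemma LC_self (hX : IsIn 𝒳 X) : IsIn (LC S 𝒳) (LocalizedModule S X) :=
  ⟨X, inferInstance, inferInstance, hX, LinearMap.id, LinearMap.id, fun _ => rfl⟩

lemma LC_retract (i : N →ₗ[Localization S] M) (r : M →ₗ[Localization S] N)
    (hr : ∀ z, r (i z) = z) (hM : IsIn (LC S 𝒳) M) : IsIn (LC S 𝒳) N := by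
  obtain ⟨X, _, _, hX, i', r', h⟩ := hM
  exact ⟨X, inferInstance, inferInstance, hX, i' ∘ₗ i, r ∘ₗ r', fun z => by
    rw [LinearMap.comp_apply, LinearMap.comp_apply, h, hr]⟩

lemma LC_equiv (e : M ≃ₗ[Localization S] N) (hM : IsIn (LC S 𝒳) M) : IsIn (LC S 𝒳) N :=
  LC_retract e.symm.toLinearMap e.toLinearMap (fun z => e.apply_symm_apply z) hM

lemma LC_finite (h : IsResolving A 𝒳) (hM : IsIn (LC S 𝒳) M) :
    Module.Finite (Localization S) M := by
  obtain ⟨X, _, _, hX, i', r', h'⟩ := hM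
  have := h.finite hX
  have : Module.Finite (Localization S) (LocalizedModule S X) :=
    Module.Finite.of_isLocalizedModule S (LocalizedModule.mkLinearMap S X)
  exact Module.Finite.of_surjective r' fun z => ⟨i' z, h' z⟩

lemma LC_proj (h : IsResolving A 𝒳) [Module.Finite (Localization S) M]
    [Module.Projective (Localization S) M] : IsIn (LC S 𝒳) M := by
  obtain ⟨n, π, hπ⟩ := Module.Finite.exists_fin' (Localization S) M
  obtain ⟨σ, hσ⟩ := Module.projective_lifting_property π LinearMap.id hπ
  let b := (Pi.basisFun A (Fin n)).ofIsLocalizedModule (Localization S) S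
    (LocalizedModule.mkLinearMap S (Fin n → A))
  exact LC_retract σ π (fun z => LinearMap.congr_fun hσ z)
    (LC_equiv b.equivFun (LC_self h.proj))

variable (S) in
lemma loc_prod : ∃ e : LocalizedModule S (X × F) ≃ₗ[Localization S]
      (LocalizedModule S X × LocalizedModule S F), ∀ z, e z =
      (locMap S (LinearMap.fst A X F) z, locMap S (LinearMap.snd A X F) z) := by
  refine ⟨LinearEquiv.ofBijective ((locMap S (LinearMap.fst A X F)).prod
    (locMap S (LinearMap.snd A X F))) ⟨?_, ?_⟩, fun z => rfl⟩
  · refine (injective_iff_map_eq_zero _).2 ?_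
    intro z hz
    induction z using LocalizedModule.induction_on with
    | h z s =>
      have h1 : (LocalizedModule.mk z.1 s, LocalizedModule.mk z.2 s) =
        (0 : LocalizedModule S X × LocalizedModule S F) := by
        rw [← hz]
        simp
      rw [Prod.mk_eq_zero, loc_zero_iff, loc_zero_iff] at h1
      obtain ⟨⟨u, hu⟩, ⟨v, hv⟩⟩ := h1
      rw [loc_zero_iff]
      refine ⟨u * v, ?_⟩
      ext
      · simp [mul_comm (u : A), mul_smul, hu]
      · simp [mul_smul, hv]
  · rintro ⟨z, w⟩
    obtain ⟨m, f, s, rfl, rfl⟩ := loc_common S z w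
    refine ⟨LocalizedModule.mk (m, f) s, ?_⟩
    simp

lemma loc_comp (f : K →ₗ[A] X) (g : X →ₗ[A] Z) (z : LocalizedModule S K) :
    locMap S g (locMap S f z) = locMap S (g ∘ₗ f) z := by
  induction z using LocalizedModule.induction_on with
  | h z s => simp

lemma loc_neg (f : K →ₗ[A] X) (z : LocalizedModule S K) :
    locMap S (-f) z = - locMap S f z := by
  induction z using LocalizedModule.induction_on with
  | h z s =>
    rw [LocalizedModule.map_mk, LocalizedModule.map_mk, LinearMap.neg_apply,
      eq_neg_iff_add_eq_zero, ← loc_add, neg_add_cancel, LocalizedModule.zero_mk]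

lemma LC_ext_aux (h : IsResolving A 𝒳) (hX : IsIn 𝒳 X) (hZ : IsIn 𝒳 Z)
    {f : LocalizedModule S X →ₗ[Localization S] M} {g : M →ₗ[Localization S] LocalizedModule S Z}
    (hs : IsSES f g) [Module.Finite A F] [Module.Projective A F]
    (π : F →ₗ[A] Z) (hπ : Function.Surjective π)
    (σ : LocalizedModule S F →ₗ[Localization S] M) (hσ : ∀ z, g (σ z) = locMap S π z)
    (k : LinearMap.ker π →ₗ[A] X)
    (hk : ∀ c, f (locMap S k c) = σ (locMap S (LinearMap.ker π).subtype c)) :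
    IsIn (LC S 𝒳) M := by
  let kk : LinearMap.ker π →ₗ[A] X × F := k.prod (-(LinearMap.ker π).subtype)
  have hkk : Function.Injective kk := by
    intro a b hab
    have := congrArg Prod.snd hab
    exact Subtype.ext (neg_injective this)
  have hses : IsSES kk (LinearMap.range kk).mkQ :=
    ⟨hkk, Submodule.mkQ_surjective _, by simp⟩
  -- the extension over the base ring
  have hle : LinearMap.range kk ≤ LinearMap.ker (π ∘ₗ LinearMap.snd A X F) := by
    rintro _ ⟨c, rfl⟩
    have := c.2
    rw [LinearMap.mem_ker] at this
    simp [kk, this]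
  have hW : IsIn 𝒳 ((X × F) ⧸ LinearMap.range kk) := by
    refine h.ext (f := (LinearMap.range kk).mkQ ∘ₗ LinearMap.inl A X F)
      (g := (LinearMap.range kk).liftQ (π ∘ₗ LinearMap.snd A X F) hle) ⟨?_, ?_, ?_⟩ hX hZ
    · refine (injective_iff_map_eq_zero _).2 ?_
      intro x hx
      rw [LinearMap.comp_apply, Submodule.mkQ_apply, Submodule.Quotient.mk_eq_zero] at hx
      obtain ⟨c, hc⟩ := hx
      have h2 : -(c : F) = 0 := congrArg Prod.snd hc
      have h3 : c = 0 := Subtype.ext (neg_eq_zero.1 h2)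
      have h4 : k c = x := congrArg Prod.fst hc
      rw [← h4, h3, map_zero]
    · intro z
      obtain ⟨v, rfl⟩ := hπ z
      exact ⟨Submodule.Quotient.mk (0, v), rfl⟩
    · ext w
      obtain ⟨⟨x, v⟩, rfl⟩ := Submodule.mkQ_surjective _ w
      constructor
      · rintro ⟨x', hx'⟩
        rw [← hx', LinearMap.mem_ker]
        change π 0 = 0
        simp
      · intro hw
        have hw : π v = 0 := hw
        refine ⟨x + k ⟨v, hw⟩, ?_⟩
        rw [LinearMap.comp_apply, Submodule.mkQ_apply, Submodule.mkQ_apply, Submodule.Quotient.eq]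
        refine ⟨⟨v, hw⟩, ?_⟩
        ext
        · simp [kk]
        · simp [kk]
  -- the comparison
  obtain ⟨e, he⟩ := loc_prod (X := X) (F := F) S
  let Θ : LocalizedModule S (X × F) →ₗ[Localization S] M :=
    (f.coprod σ) ∘ₗ e.toLinearMap
  have hΘ : ∀ z, Θ z = f (locMap S (LinearMap.fst A X F) z) +
      σ (locMap S (LinearMap.snd A X F) z) := by
    intro z
    change (f.coprod σ) (e z) = _
    rw [he]
    rfl
  have hl := hses.loc S
  have e1 : ∀ c, locMap S (LinearMap.fst A X F) (locMap S kk c) = locMap S k c := by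
    intro c
    rw [loc_comp]
    rfl
  have e2 : ∀ c, locMap S (LinearMap.snd A X F) (locMap S kk c) =
      - locMap S (LinearMap.ker π).subtype c := by
    intro c
    rw [loc_comp, ← loc_neg]
    rfl
  have hker : LinearMap.ker (locMap S (LinearMap.range kk).mkQ) = LinearMap.ker Θ := by
    rw [← hl.2.2]
    ext z
    constructor
    · rintro ⟨c, rfl⟩
      rw [LinearMap.mem_ker, hΘ, e1, e2, hk, map_neg, add_neg_cancel]
    · intro hz
      rw [LinearMap.mem_ker, hΘ] at hz
      have hgf : ∀ a, g (f a) = 0 := fun a => by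
        have : f a ∈ LinearMap.ker g := hs.2.2 ▸ ⟨a, rfl⟩
        exact this
      have h1 : locMap S π (locMap S (LinearMap.snd A X F) z) = 0 := by
        have := congrArg g hz
        rwa [map_add, hgf, hσ, zero_add, map_zero] at this
      have h2 : locMap S (LinearMap.snd A X F) z ∈
          LinearMap.range (locMap S (LinearMap.ker π).subtype) := by
        rw [((IsSES.ker hπ).loc S).2.2]
        exact h1
      obtain ⟨c, hc⟩ := h2
      refine ⟨-c, e.injective ?_⟩
      rw [he, he, e1, e2, map_neg, map_neg, neg_neg, hc]
      congr 1
      apply hs.1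
      rw [← hc, ← hk] at hz
      rw [map_neg]
      exact (eq_neg_of_add_eq_zero_left hz).symm
  have hsurj : Function.Surjective Θ := by
    intro m
    obtain ⟨v, hv⟩ := LocalizedModule.map_surjective S π hπ (g m)
    have h1 : m - σ v ∈ LinearMap.range f := by
      rw [hs.2.2, LinearMap.mem_ker, map_sub, hσ]
      exact sub_eq_zero.2 hv.symm
    obtain ⟨x, hx⟩ := h1
    refine ⟨e.symm (x, v), ?_⟩
    change (f.coprod σ) (e (e.symm (x, v))) = m
    rw [e.apply_symm_apply]
    simp [hx]
  exact LC_equiv (((LinearMap.quotKerEquivOfSurjective _ hl.2.1).symm.trans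
    (Submodule.quotEquivOfEq _ _ hker)).trans (LinearMap.quotKerEquivOfSurjective Θ hsurj))
    (LC_self hW)

lemma LC_ext_aux2 [IsNoetherianRing A] (h : IsResolving A 𝒳) (hX : IsIn 𝒳 X) (hZ : IsIn 𝒳 Z)
    {f : LocalizedModule S X →ₗ[Localization S] M} {g : M →ₗ[Localization S] LocalizedModule S Z}
    (hs : IsSES f g) : IsIn (LC S 𝒳) M := by
  have := h.finite hZ
  obtain ⟨n, π, hπ⟩ := Module.Finite.exists_fin' A Z
  have : Module.Projective (Localization S) (LocalizedModule S (Fin n → A)) :=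
    Module.projective_of_isLocalizedModule S (LocalizedModule.mkLinearMap S _)
  obtain ⟨σ, hσ⟩ := Module.projective_lifting_property g (locMap S π) hs.2.1
  have hσ' : ∀ z, g (σ z) = locMap S π z := fun z => LinearMap.congr_fun hσ z
  have hmem : ∀ c, (σ ∘ₗ locMap S (LinearMap.ker π).subtype) c ∈ LinearMap.range f := by
    intro c
    rw [hs.2.2, LinearMap.mem_ker, LinearMap.comp_apply, hσ', loc_comp]
    have : π ∘ₗ (LinearMap.ker π).subtype = 0 := by
      ext c
      exact c.2
    rw [this]
    simp
  let hh : LocalizedModule S (LinearMap.ker π) →ₗ[Localization S] LocalizedModule S X :=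
    (LinearEquiv.ofInjective f hs.1).symm.toLinearMap ∘ₗ LinearMap.codRestrict _ _ hmem
  have hhh : ∀ c, f (hh c) = σ (locMap S (LinearMap.ker π).subtype c) := by
    intro c
    exact congrArg Subtype.val ((LinearEquiv.ofInjective f hs.1).apply_symm_apply
      ⟨_, hmem c⟩)
  obtain ⟨k, s, hk⟩ := loc_lift S hh
  have hinv : ∀ m : M, (Localization.mk 1 s : Localization S) •
      (algebraMap A (Localization S) s) • m = m := by
    intro m
    rw [smul_smul, ← Localization.mk_one_eq_algebraMap, Localization.mk_mul, one_mul, mul_one,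
      Localization.mk_self, one_smul]
  have hinv' : ∀ m : M, (algebraMap A (Localization S) s) •
      (Localization.mk 1 s : Localization S) • m = m := by
    intro m
    rw [smul_comm, hinv]
  refine LC_ext_aux h hX hZ (f := (Localization.mk 1 s : Localization S) • f) (g := g)
    ⟨?_, hs.2.1, ?_⟩ π hπ σ hσ' k ?_
  · intro a b hab
    apply hs.1
    have := congrArg (fun m : M => (algebraMap A (Localization S) s) • m) hab
    simpa only [LinearMap.smul_apply, hinv'] using this
  · rw [← hs.2.2]
    ext m
    constructor
    · rintro ⟨a, rfl⟩
      exact Submodule.smul_mem _ _ ⟨a, rfl⟩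
    · rintro ⟨a, rfl⟩
      refine ⟨(algebraMap A (Localization S) s) • a, ?_⟩
      rw [LinearMap.smul_apply, map_smul, hinv]
  · intro c
    rw [LinearMap.smul_apply, hk, ← hhh, ← algebraMap_smul (Localization S) (s : A) (hh c),
      map_smul, hinv]

lemma LC_ext [IsNoetherianRing A] (h : IsResolving A 𝒳) {f : L →ₗ[Localization S] M}
    {g : M →ₗ[Localization S] N} (hs : IsSES f g) (hL : IsIn (LC S 𝒳) L)
    (hN : IsIn (LC S 𝒳) N) : IsIn (LC S 𝒳) M := by
  obtain ⟨X, _, _, hX, i, r, hr⟩ := hL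
  obtain ⟨Z, _, _, hZ, i', r', hr'⟩ := hN
  let e := retractEquiv i r hr
  let e' := retractEquiv i' r' hr'
  let F : (L × LinearMap.ker r) →ₗ[Localization S] (M × (LinearMap.ker r × LinearMap.ker r')) :=
    LinearMap.prodMap f (LinearMap.inl _ _ _)
  let G : (M × (LinearMap.ker r × LinearMap.ker r')) →ₗ[Localization S] (N × LinearMap.ker r') :=
    LinearMap.prodMap g (LinearMap.snd _ _ _)
  have hs' : IsSES (F ∘ₗ e.toLinearMap) (e'.symm.toLinearMap ∘ₗ G) := by
    refine ⟨?_, ?_, ?_⟩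
    · exact (hs.1.prodMap LinearMap.inl_injective).comp e.injective
    · exact e'.symm.surjective.comp (hs.2.1.prodMap Prod.snd_surjective)
    · rw [LinearEquiv.range_comp, LinearEquiv.ker_comp]
      ext ⟨m, a, b⟩
      constructor
      · rintro ⟨⟨l, c⟩, hl⟩
        rw [← hl, LinearMap.mem_ker]
        have : g (f l) = 0 := by
          have : f l ∈ LinearMap.ker g := hs.2.2 ▸ ⟨l, rfl⟩
          exact this
        change (g (f l), (0 : LinearMap.ker r')) = 0
        rw [this]
        rfl
      · intro hm
        have h1 : g m = 0 := congrArg Prod.fst hm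
        have h2 : b = 0 := congrArg Prod.snd hm
        have h3 : m ∈ LinearMap.range f := by
          rw [hs.2.2]
          exact h1
        obtain ⟨l, rfl⟩ := h3
        exact ⟨(l, a), by rw [h2]; rfl⟩
  exact LC_retract (LinearMap.inl _ _ _) (LinearMap.fst _ _ _) (fun z => rfl)
    (LC_ext_aux2 h hX hZ hs')

lemma LC_syz [IsNoetherianRing A] (h : IsResolving A 𝒳) {f : L →ₗ[Localization S] P}
    {g : P →ₗ[Localization S] N} (hs : IsSES f g) [Module.Finite (Localization S) P]
    [Module.Projective (Localization S) P]
    (hN : IsIn (LC S 𝒳) N) : IsIn (LC S 𝒳) L := by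
  obtain ⟨X, _, _, hX, i, r, hr⟩ := hN
  have := h.finite hX
  obtain ⟨n, π, hπ⟩ := Module.Finite.exists_fin' A X
  have : Module.Projective (Localization S) (LocalizedModule S (Fin n → A)) :=
    Module.projective_of_isLocalizedModule S (LocalizedModule.mkLinearMap S _)
  have hrs : Function.Surjective r := fun z => ⟨i z, hr z⟩
  have hπ' := LocalizedModule.map_surjective S π hπ
  have h1 : IsIn (LC S 𝒳) (LinearMap.ker (locMap S π)) :=
    LC_equiv ((IsSES.ker hπ).loc S).kerEquiv.symm (LC_self (h.syz (IsSES.ker hπ) hX))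
  have h2 : IsIn (LC S 𝒳) (LinearMap.ker r) :=
    LC_retract (LinearMap.ker r).subtype
      (LinearMap.snd _ _ _ ∘ₗ (retractEquiv i r hr).toLinearMap) (fun z => by
        apply Subtype.ext
        change z.1 - i (r z.1) = z.1
        have : r z.1 = 0 := z.2
        rw [this]
        simp) (LC_self hX)
  have h3 : IsIn (LC S 𝒳) (LinearMap.ker (r ∘ₗ locMap S π)) := by
    refine LC_ext h (f := Submodule.inclusion (p := LinearMap.ker (locMap S π))
        (p' := LinearMap.ker (r ∘ₗ locMap S π)) ?_)
      (g := LinearMap.codRestrict (LinearMap.ker r) (locMap S π ∘ₗ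
        (LinearMap.ker (r ∘ₗ locMap S π)).subtype) ?_) ⟨?_, ?_, ?_⟩ h1 h2
    · intro z hz
      rw [LinearMap.mem_ker] at hz
      rw [LinearMap.mem_ker, LinearMap.comp_apply, hz, map_zero]
    · rintro ⟨z, hz⟩
      exact hz
    · exact Submodule.inclusion_injective _
    · rintro ⟨z, hz⟩
      obtain ⟨v, rfl⟩ := hπ' z
      exact ⟨⟨v, hz⟩, rfl⟩
    · ext ⟨z, hz⟩
      constructor
      · rintro ⟨c, hc⟩
        rw [← hc]
        exact Subtype.ext c.2
      · intro h0
        exact ⟨⟨z, congrArg Subtype.val h0⟩, rfl⟩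
  have hsurj : Function.Surjective (r ∘ₗ locMap S π) := hrs.comp hπ'
  have h4 := LC_ext h (PB_fst g (r ∘ₗ locMap S π) hsurj) h3 (LC_proj h)
  obtain ⟨ρ, hρ⟩ := (PB_snd g (r ∘ₗ locMap S π) hs.2.1).retraction
  exact LC_equiv hs.kerEquiv (LC_retract _ ρ hρ h4)

variable (S) in
lemma LC_resolving [IsNoetherianRing A] (h : IsResolving A 𝒳) :
    IsResolving (Localization S) (LC S 𝒳) where
  fg M hM := LC_finite (M := M) h hM
  iso_closed := by
    rintro M N ⟨e⟩ hM
    exact LC_equiv (M := M) (N := N) e hM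
  proj_mem M hf hp := LC_proj (M := M) h
  summand_closed M N hMN := LC_retract (N := M) (M := M × N) (LinearMap.inl _ _ _)
    (LinearMap.fst _ _ _) (fun z => rfl) hMN
  ext_closed L M N f g hs hL hN := LC_ext (L := L) (M := M) (N := N) h hs hL hN
  syzygy_closed K P M f g hs hK hP hpP hM := LC_syz (L := K) (P := P) (N := M) h hs hM

end LocCat

section GradePart

variable {A : Type u} [CommRing A]

/-- The cyclic quotient by a sequence. -/
abbrev QS (ys : List A) : Type u := A ⧸ (Ideal.ofList ys • ⊤ : Submodule A A)

noncomputable def QSloc (S : Submonoid A) (ys : List A) :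
    LocalizedModule S (QS ys) ≃ₗ[Localization S]
      QS (ys.map (algebraMap A (Localization S))) :=
  let N : Submodule A A := Ideal.ofList ys • ⊤
  let e1 : LocalizedModule S (A ⧸ N) ≃ₗ[A]
      (Localization S ⧸ N.localized' (Localization S) S (Algebra.linearMap A (Localization S))) :=
    IsLocalizedModule.iso S
      (N.toLocalizedQuotient' (Localization S) S (Algebra.linearMap A (Localization S)))
  let e2 := e1.extendScalarsOfIsLocalization S (Localization S)
  e2.trans (Submodule.quotEquivOfEq _ _ (by
    change Submodule.localized' (Localization S) S (Algebra.linearMap A (Localization S))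
      (Ideal.ofList ys • ⊤ : Ideal A) = _
    rw [smul_eq_mul, Ideal.mul_top, smul_eq_mul, Ideal.mul_top, ← Ideal.map_ofList]
    exact Ideal.localized'_eq_map (Localization S) S (Ideal.ofList ys)))

lemma QS_LPD [IsNoetherianRing A] (p : PrimeSpectrum A) {ys : List A}
    (hm : ∀ y ∈ ys, y ∈ p.asIdeal)
    (hy : RingTheory.Sequence.IsWeaklyRegular A ys) (j : ℕ) :
    LPD p j (QS ys) ↔ ys.length ≤ j := by
  have h1 := hy.of_isLocalization (Localization.AtPrime p.asIdeal) p.asIdeal.primeCompl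
  have h2 := ModuleCat.projectiveDimension_quotient_eq_add_length_of_isWeaklyRegular
    (ModuleCat.of (Localization.AtPrime p.asIdeal) (Localization.AtPrime p.asIdeal)) _ h1 (by
      intro r hr
      obtain ⟨y, hy, rfl⟩ := List.mem_map.1 hr
      exact (IsLocalization.AtPrime.to_map_mem_maximal_iff _ p.asIdeal y).2 (hm y hy))
  rw [ModuleCat.projectiveDimension_eq_zero_of_projective
    (ModuleCat.of (Localization.AtPrime p.asIdeal) (Localization.AtPrime p.asIdeal)),
    zero_add, List.length_map] at h2
  have h3 : LPD p j (QS ys) ↔ PD (Localization.AtPrime p.asIdeal) j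
      (QS (ys.map (algebraMap A (Localization.AtPrime p.asIdeal)))) :=
    ⟨PD_equiv (QSloc p.asIdeal.primeCompl ys), PD_equiv (QSloc p.asIdeal.primeCompl ys).symm⟩
  rw [h3, PD, ← projectiveDimension_le_iff]
  change projectiveDimension (ModuleCat.of (Localization.AtPrime p.asIdeal) _) ≤ _ ↔ _
  erw [h2]
  norm_cast

lemma reg_len [IsNoetherianRing A]
    (hreg : ∀ p : PrimeSpectrum A, IsRegLocalRing (Localization.AtPrime p.asIdeal))
    (p : PrimeSpectrum A) : ∃ D : ℕ, ∀ ys : List A, (∀ y ∈ ys, y ∈ p.asIdeal) →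
      RingTheory.Sequence.IsWeaklyRegular A ys → ys.length ≤ D := by
  obtain ⟨D, hD⟩ := Reg_of_regular (hreg p)
  refine ⟨D, fun ys hm hy => ?_⟩
  rw [← QS_LPD p hm hy]
  exact Reg_PD hD _

lemma exists_max_seq [IsNoetherianRing A]
    (hreg : ∀ p : PrimeSpectrum A, IsRegLocalRing (Localization.AtPrime p.asIdeal))
    (p : PrimeSpectrum A) : ∃ ys : List A, (∀ y ∈ ys, y ∈ p.asIdeal) ∧
      RingTheory.Sequence.IsWeaklyRegular A ys ∧
      ∀ x ∈ p.asIdeal, ¬ IsSMulRegular (QS ys) x := by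
  classical
  obtain ⟨D, hD⟩ := reg_len hreg p
  let P : ℕ → Prop := fun n => ∃ ys : List A, (∀ y ∈ ys, y ∈ p.asIdeal) ∧
      RingTheory.Sequence.IsWeaklyRegular A ys ∧ ys.length = n
  have h0 : P 0 := ⟨[], by simp, by simp, rfl⟩
  obtain ⟨ys, hm, hy, hl⟩ := Nat.findGreatest_spec (P := P) (Nat.zero_le D) h0
  refine ⟨ys, hm, hy, fun x hx hreg' => ?_⟩
  have hw : RingTheory.Sequence.IsWeaklyRegular A (ys ++ [x]) := by
    rw [RingTheory.Sequence.isWeaklyRegular_append_iff]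
    exact ⟨hy, (RingTheory.Sequence.isWeaklyRegular_singleton_iff _ _).2 hreg'⟩
  have hm' : ∀ y ∈ ys ++ [x], y ∈ p.asIdeal := by
    intro y hy'
    rcases List.mem_append.1 hy' with h | h
    · exact hm y h
    · rw [List.mem_singleton.1 h]
      exact hx
  have h1 := hD _ hm' hw
  have h2 := Nat.le_findGreatest (P := P) h1 ⟨_, hm', hw, rfl⟩
  rw [← hl, List.length_append, List.length_singleton] at h2
  omega

lemma grade_bound [IsNoetherianRing A]
    (hreg : ∀ p : PrimeSpectrum A, IsRegLocalRing (Localization.AtPrime p.asIdeal))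
    (p : PrimeSpectrum A) : ∃ ys : List A, (∀ y ∈ ys, y ∈ p.asIdeal) ∧
      RingTheory.Sequence.IsWeaklyRegular A ys ∧
      ∀ (M : Type u) [AddCommGroup M] [Module A M] [Module.Finite A M],
        LPD p ys.length M := by
  obtain ⟨ys, hm, hy, hmax⟩ := exists_max_seq hreg p
  refine ⟨ys, hm, hy, ?_⟩
  have hsub : (p.asIdeal : Set A) ⊆ ⋃ q ∈ associatedPrimes A (QS ys), (q : Set A) := by
    rw [biUnion_associatedPrimes_eq_zero_divisors]
    intro x hx
    by_contra hcon
    apply hmax x hx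
    rw [isSMulRegular_iff_right_eq_zero_of_smul]
    intro z hz
    by_contra hz0
    exact hcon ⟨z, hz0, hz⟩
  have hfin : (associatedPrimes A (QS ys)).Finite := associatedPrimes.finite A (QS ys)
  obtain ⟨q, hq, hpq⟩ := (Ideal.subset_union_prime_finite hfin (f := id) ⊥ ⊥
    (fun q hq _ _ => hq.1)).1 hsub
  have hqp : q.IsPrime := hq.1
  let q' : PrimeSpectrum A := ⟨q, hqp⟩
  obtain ⟨D, hD⟩ := Reg_of_regular (hreg q')
  have hle : D ≤ ys.length := by
    by_contra hlt
    have h1 := Module.associatedPrimes.mem_associatedPrimes_atPrime_of_mem_associatedPrimes hq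
    have hN := hD.noeth
    have h2 := (isAssociatedPrime_iff.1 h1)
    obtain ⟨hpr, y, hy1⟩ := h2
    have h3 : y = 0 := Reg_socle hD (LocalizedModule q'.asIdeal.primeCompl (QS ys)) ys.length
      (not_le.1 hlt) ((QS_LPD q' (fun y hy => hpq (hm y hy)) hy _).2 le_rfl) y (by
        intro t ht
        have : t ∈ IsLocalRing.maximalIdeal (Localization.AtPrime q) := ht
        rw [hy1] at this
        simpa [Submodule.mem_colon_singleton] using this)
    apply hpr.ne_top
    rw [hy1, h3, eq_top_iff]
    intro t _
    simp [Submodule.mem_colon_singleton]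
  intro M _ _ _
  have : LPD q' D M := Reg_PD hD _
  exact PD_mono hle (LPD_gen (p := p) (q := q') hpq this)

end GradePart

section Final

variable {A : Type u} [CommRing A]

lemma main_mem [IsNoetherianRing A]
    (hreg : ∀ p : PrimeSpectrum A, IsRegLocalRing (Localization.AtPrime p.asIdeal))
    {𝒳 : Set (ModuleCat.{u} A)} (h : IsResolving A 𝒳) (f : PrimeSpectrum A → ℕ)
    (hf : ∀ p : PrimeSpectrum A, ∃ X : ModuleCat.{u} A, X ∈ 𝒳 ∧ ∀ j : ℕ, LPD p j X → f p ≤ j) :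
    ∀ (I : Ideal A) (M : Type u) [AddCommGroup M] [Module A M] [Module.Finite A M],
      (J A M).radical = I → (∀ p : PrimeSpectrum A, LPD p (f p) M) → IsIn 𝒳 M := by
  intro I
  induction I using WellFoundedGT.induction with
  | ind I ih =>
  intro M _ _ _ hI hM
  by_cases htop : J A M = ⊤
  · have := J_proj_iff.1 htop
    exact h.proj
  obtain ⟨m, hm, hmle⟩ := Ideal.exists_le_maximal _ htop
  have hmp := hm.isPrime
  obtain ⟨p0, hp0, _⟩ := Ideal.exists_minimalPrimes_le hmle
  have hp0p : p0.IsPrime := hp0.1.1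
  let p : PrimeSpectrum A := ⟨p0, hp0p⟩
  obtain ⟨X, hX, hXj⟩ := hf p
  have hXf : Module.Finite A X := h.fg X hX
  obtain ⟨s, hs⟩ : p0.FG := IsNoetherian.noetherian p0
  obtain ⟨Y, _, _, hYf, hY1, hY2, hY3, hY4⟩ := E_iter (A := A) (M := X) s
  have hYX : IsIn 𝒳 Y := hY1 𝒳 h hX
  obtain ⟨D, hD⟩ := Reg_of_regular (hreg p)
  have hrad : IsLocalRing.maximalIdeal (Localization.AtPrime p.asIdeal) ≤
      (J (Localization.AtPrime p.asIdeal) (LocalizedModule p.asIdeal.primeCompl M)).radical := by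
    have h1 := IsLocalization.AtPrime.radical_map_of_mem_minimalPrimes
      (Localization.AtPrime p.asIdeal) p.asIdeal (J A M) hp0
    rw [← IsLocalization.AtPrime.map_eq_maximalIdeal p.asIdeal, ← h1]
    refine Ideal.radical_mono (Ideal.map_le_iff_le_comap.2 fun t ht => ?_)
    exact J_loc p.asIdeal.primeCompl ht
  have hradY : IsLocalRing.maximalIdeal (Localization.AtPrime p.asIdeal) ≤
      (J (Localization.AtPrime p.asIdeal) (LocalizedModule p.asIdeal.primeCompl Y)).radical := by
    rw [← IsLocalization.AtPrime.map_eq_maximalIdeal p.asIdeal]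
    refine Ideal.map_le_iff_le_comap.2 fun t ht => ?_
    have ht' : t ∈ p0 := ht
    rw [← hs] at ht'
    obtain ⟨n, hn⟩ := hY4 ht'
    refine ⟨n, ?_⟩
    rw [← map_pow]
    exact J_loc p.asIdeal.primeCompl hn
  have hloc : IsIn (LC p.asIdeal.primeCompl 𝒳) (LocalizedModule p.asIdeal.primeCompl M) := by
    refine local_thm hD (LC p.asIdeal.primeCompl 𝒳) (LC_resolving p.asIdeal.primeCompl h)
      (LocalizedModule p.asIdeal.primeCompl Y) (LocalizedModule p.asIdeal.primeCompl M)
      (LC_self hYX) hradY hrad ?_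
    intro j hj
    have h1 : LPD p j X := hY3 p (by
      change (s : Set A) ⊆ p0
      rw [← hs]
      exact Ideal.subset_span) j hj
    exact PD_mono (hXj j h1) (hM p)
  obtain ⟨X', _, _, hX', i, r, hr⟩ := hloc
  have hX'f := h.finite hX'
  obtain ⟨t, ht, hfac⟩ := spread p.asIdeal.primeCompl (M := M) (X := X') i r hr
  obtain ⟨n, π, hπ⟩ := Module.Finite.exists_fin' A M
  have hEf : Module.Finite A (E π t) := inferInstance
  have hrE := radJ_E π hπ t
  refine E_descend h π hπ t hX' hfac (ih (J A (E π t)).radical ?_ (E π t) rfl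
    (fun q => E_LPD π hπ t (hM q)))
  refine lt_of_le_of_ne (hI ▸ le_sup_left.trans hrE) fun heq => ht ?_
  have h1 : t ∈ I := by
    rw [heq]
    exact hrE (Ideal.mem_sup_right (Ideal.mem_span_singleton_self t))
  rw [← hI] at h1
  exact (hp0p.radical_le_iff.2 hp0.1.2) h1

lemma exists_min [IsNoetherianRing A]
    (hreg : ∀ p : PrimeSpectrum A, IsRegLocalRing (Localization.AtPrime p.asIdeal))
    {𝒳 : Set (ModuleCat.{u} A)} (h : IsResolving A 𝒳) (p : PrimeSpectrum A) :
    ∃ n : ℕ, (∀ X ∈ 𝒳, LPD p n X) ∧ (n : ℕ∞) ≤ gradeE A p.asIdeal ∧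
      ∃ X : ModuleCat.{u} A, X ∈ 𝒳 ∧ ∀ j : ℕ, LPD p j X → n ≤ j := by
  classical
  obtain ⟨ys, hm, hy, hlp⟩ := grade_bound hreg p
  have hex : ∃ n : ℕ, ∀ X ∈ 𝒳, LPD p n X :=
    ⟨ys.length, fun X hX => by
      have := h.fg X hX
      exact hlp X⟩
  refine ⟨Nat.find hex, Nat.find_spec hex, ?_, ?_⟩
  · have h1 : Nat.find hex ≤ ys.length := Nat.find_min' hex (fun X hX => by
      have := h.fg X hX
      exact hlp X)
    refine le_trans (Nat.cast_le.2 h1) (le_sSup ⟨ys, hm, hy, rfl⟩)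
  · rcases Nat.eq_zero_or_pos (Nat.find hex) with h0 | h0
    · exact ⟨ModuleCat.of A A, h.proj_mem _ inferInstance inferInstance, fun j _ => by omega⟩
    · have h1 := Nat.find_min hex (m := Nat.find hex - 1) (by omega)
      push Not at h1
      obtain ⟨X, hX, hX1⟩ := h1
      refine ⟨X, hX, fun j hj => ?_⟩
      by_contra hlt
      exact hX1 (PD_mono (by omega) hj)

lemma sup_eq [IsNoetherianRing A] {𝒳 : Set (ModuleCat.{u} A)}
    (hfg : ∀ X ∈ 𝒳, Module.Finite A X) (p : PrimeSpectrum A) (n : ℕ)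
    (h1 : ∀ X ∈ 𝒳, LPD p n X)
    (h2 : ∃ X : ModuleCat.{u} A, X ∈ 𝒳 ∧ ∀ j : ℕ, LPD p j X → n ≤ j)
    (hA : ModuleCat.of A A ∈ 𝒳) :
    ((n : ℕ∞) : WithBot ℕ∞) = ⨆ X ∈ 𝒳, localPdim A p X := by
  apply le_antisymm
  · obtain ⟨X, hX, hXj⟩ := h2
    rcases Nat.eq_zero_or_pos n with rfl | hn
    · refine le_trans ?_ (le_iSup₂ (f := fun X (_ : X ∈ 𝒳) => localPdim A p X) _ hA)
      refine le_sInf ?_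
      rintro x (⟨rfl, hsub⟩ | ⟨n, rfl, -⟩)
      · exfalso
        have e := IsLocalizedModule.iso p.asIdeal.primeCompl
          (Algebra.linearMap A (Localization.AtPrime p.asIdeal))
        have hs2 : Subsingleton (LocalizedModule p.asIdeal.primeCompl A) := hsub
        have : Subsingleton (Localization.AtPrime p.asIdeal) := e.symm.toEquiv.subsingleton
        exact not_subsingleton (Localization.AtPrime p.asIdeal) this
      · exact WithBot.coe_le_coe.2 (Nat.cast_le.2 (Nat.zero_le n))
    · refine le_trans ?_ (le_iSup₂ (f := fun X (_ : X ∈ 𝒳) => localPdim A p X) X hX)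
      by_contra hlt
      have hlt' : localPdim A p X < ((n : ℕ∞) : WithBot ℕ∞) := not_le.1 hlt
      have h3 : localPdim A p X ≤ (((n - 1 : ℕ) : ℕ∞) : WithBot ℕ∞) := by
        revert hlt'
        generalize localPdim A p X = w
        intro hlt'
        induction w using WithBot.recBotCoe with
        | bot => exact bot_le
        | coe w =>
          rw [WithBot.coe_lt_coe] at hlt'
          rw [WithBot.coe_le_coe]
          lift w to ℕ using (hlt'.trans_le le_top).ne
          rw [Nat.cast_lt] at hlt'
          rw [Nat.cast_le]
          omega
      have h4 := hXj _ ((localPdim_le_iff p _ X (hfg X hX)).1 h3)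
      omega
  · exact iSup₂_le fun X hX => (localPdim_le_iff p n X (hfg X hX)).2 (h1 X hX)

lemma first_dir [IsNoetherianRing A]
    (hreg : ∀ p : PrimeSpectrum A, IsRegLocalRing (Localization.AtPrime p.asIdeal))
    (𝒳 : Set (ModuleCat.{u} A)) (h : IsResolving A 𝒳) :
      ∃ f : PrimeSpectrum A → ℕ, GradeConsistent A f ∧
        (∀ p : PrimeSpectrum A,
          ((f p : ℕ∞) : WithBot ℕ∞) = ⨆ X ∈ 𝒳, localPdim A p X) ∧
        psiPd A f = 𝒳 := by
  choose f hf1 hf2 hf3 using exists_min hreg h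
  refine ⟨f, ⟨hf2, fun p q hpq => ?_⟩, fun p => ?_, ?_⟩
  · obtain ⟨X, hX, hXj⟩ := hf3 p
    have := h.fg X hX
    exact hXj _ (LPD_gen hpq (hf1 q X hX))
  · exact sup_eq h.fg p (f p) (hf1 p) (hf3 p) (h.proj_mem _ inferInstance inferInstance)
  · ext M
    constructor
    · rintro ⟨hM, hMp⟩
      exact main_mem hreg h f hf3 _ M rfl (fun p => (localPdim_le_iff p _ M hM).1 (hMp p))
    · intro hM
      exact ⟨h.fg M hM, fun p => (localPdim_le_iff p _ M (h.fg M hM)).2 (hf1 p M hM)⟩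

lemma psi_mem [IsNoetherianRing A] (f : PrimeSpectrum A → ℕ) (M : ModuleCat.{u} A) :
    M ∈ psiPd A f ↔ Module.Finite A M ∧ ∀ p : PrimeSpectrum A, LPD p (f p) M :=
  ⟨fun h => ⟨h.1, fun p => (localPdim_le_iff p _ M h.1).1 (h.2 p)⟩,
   fun h => ⟨h.1, fun p => (localPdim_le_iff p _ M h.1).2 (h.2 p)⟩⟩

lemma psi_resolving [IsNoetherianRing A] (f : PrimeSpectrum A → ℕ) :
    IsResolving A (psiPd A f) where
  fg M hM := hM.1
  iso_closed M N := by
    rintro ⟨e⟩ hM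
    rw [psi_mem] at hM ⊢
    have := hM.1
    exact ⟨Module.Finite.equiv e, fun p => LPD_retract e.symm.toLinearMap e.toLinearMap
      (fun x => e.apply_symm_apply x) (hM.2 p)⟩
  proj_mem M h1 h2 := (psi_mem f M).2 ⟨h1, fun p => LPD_of_projective⟩
  summand_closed M N hMN := by
    rw [psi_mem] at hMN ⊢
    have : Module.Finite A (M × N) := hMN.1
    refine ⟨Module.Finite.of_surjective (LinearMap.fst A M N) Prod.fst_surjective, fun p => ?_⟩
    exact LPD_retract (LinearMap.inl A M N) (LinearMap.fst A M N) (fun x => rfl) (hMN.2 p)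
  ext_closed K B C g g' hs hK hC := by
    rw [psi_mem] at hK hC ⊢
    have := hK.1
    have := hC.1
    refine ⟨Module.Finite.of_exact (f := g) (g := g') (LinearMap.exact_iff.2 hs.2.2.symm) hs.2.1,
      fun p => LPD_ext hs (hK.2 p) (hC.2 p)⟩
  syzygy_closed K P M g g' hs hK hP hPp hM := by
    rw [psi_mem] at hM ⊢
    exact ⟨hK, fun p => LPD_left' hs LPD_of_projective (hM.2 p)⟩

lemma exists_seq (p : PrimeSpectrum A) (n : ℕ) (hn : (n : ℕ∞) ≤ gradeE A p.asIdeal) :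
    ∃ ys : List A, (∀ y ∈ ys, y ∈ p.asIdeal) ∧
      RingTheory.Sequence.IsWeaklyRegular A ys ∧ ys.length = n := by
  rcases Nat.eq_zero_or_pos n with rfl | h0
  · exact ⟨[], by simp, by simp, rfl⟩
  · have h1 : ((n - 1 : ℕ) : ℕ∞) < gradeE A p.asIdeal :=
      lt_of_lt_of_le (Nat.cast_lt.2 (by omega)) hn
    obtain ⟨x, ⟨ys, hm, hy, rfl⟩, hx⟩ := lt_sSup_iff.1 h1
    rw [Nat.cast_lt] at hx
    refine ⟨ys.take n, fun y hy => hm y (List.mem_of_mem_take hy), ?_, ?_⟩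
    · rw [← List.take_append_drop n ys, RingTheory.Sequence.isWeaklyRegular_append_iff] at hy
      exact hy.1
    · rw [List.length_take]
      omega

lemma second_dir [IsNoetherianRing A] (f : PrimeSpectrum A → ℕ) (hf : GradeConsistent A f) :
      IsResolving A (psiPd A f) ∧
      (∀ p : PrimeSpectrum A,
        ((f p : ℕ∞) : WithBot ℕ∞) = ⨆ X ∈ psiPd A f, localPdim A p X) := by
  have h := psi_resolving f
  refine ⟨h, fun p => ?_⟩
  refine sup_eq h.fg p (f p) (fun X hX => ((psi_mem f X).1 hX).2 p) ?_
    (h.proj_mem _ inferInstance inferInstance)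
  obtain ⟨ys, hm, hy, hl⟩ := exists_seq p (f p) (hf.1 p)
  obtain ⟨s, hs⟩ : p.asIdeal.FG := IsNoetherian.noetherian p.asIdeal
  obtain ⟨Y, _, _, hYf, hY1, hY2, hY3, hY4⟩ := E_iter (A := A) (M := QS ys) s
  refine ⟨ModuleCat.of A Y, (psi_mem f _).2 ⟨hYf, fun q => ?_⟩, fun j hj => ?_⟩
  · by_cases hpq : p.asIdeal ≤ q.asIdeal
    · apply hY2
      rw [QS_LPD q (fun y hy => hpq (hm y hy)) hy, hl]
      exact hf.2 p q hpq
    · refine PD_mono (Nat.zero_le _) ((LPD_zero_iff q).2 fun hJ => hpq ?_)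
      rw [← hs]
      exact hY4.trans (q.2.radical_le_iff.2 hJ)
  · have h1 := hY3 p (by rw [← hs]; exact Ideal.subset_span) j hj
    rwa [QS_LPD p hm hy, hl] at h1

end Final

/-- Corollary: over a regular ring, `φ` and `ψ` are mutually inverse bijections between
all resolving subcategories of `mod R` and the grade consistent functions on `Spec R`. -/
theorem regular_resolving_classification [IsNoetherianRing R]
    (hreg : ∀ p : PrimeSpectrum R, IsRegLocalRing (Localization.AtPrime p.asIdeal)) :
    (∀ 𝒳 : Set (ModuleCat.{u} R), IsResolving R 𝒳 →
      ∃ f : PrimeSpectrum R → ℕ, GradeConsistent R f ∧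
        (∀ p : PrimeSpectrum R,
          ((f p : ℕ∞) : WithBot ℕ∞) = ⨆ X ∈ 𝒳, localPdim R p X) ∧
        psiPd R f = 𝒳) ∧
    (∀ f : PrimeSpectrum R → ℕ, GradeConsistent R f →
      IsResolving R (psiPd R f) ∧
      (∀ p : PrimeSpectrum R,
        ((f p : ℕ∞) : WithBot ℕ∞) = ⨆ X ∈ psiPd R f, localPdim R p X)) := by
  exact ⟨first_dir hreg, second_dir⟩

end ResolvPaper
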